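/- arXiv:1803.11026 — 6 statements merged into one kernel-verified Lean document; each statement's English description precedes it below -/
import Mathlib

section
/- The function f_β is non-negative, bounded by 1, and non-decreasing as a function of |z|: for all 0 < r₁ ≤ r₂ one has 0 ≤ f̃(r₁)/r₁ ≤ f̃(r₂)/r₂ ≤ 1. -/
open Set

/-- The radial scattering data: the rescaled interaction `w_μ(r) = μ⁻² w(r/μ)` (given through its
radial profile `w`), its zero-energy scattering solution `j̃` in radial form, and for each `κ ≥ 1`
the function `f̃_κ` which equals `κ j̃` on `[0, μ^β̃]` and solves
`f̃_κ'' = -½ a μ^(1-3β̃) f̃_κ` beyond `μ^β̃`. -/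
structure ScatteringODE where
  a : ℝ
  beta : ℝ
  mu : ℝ
  w : ℝ → ℝ
  jt : ℝ → ℝ
  jt' : ℝ → ℝ
  ft : ℝ → ℝ → ℝ
  ft' : ℝ → ℝ → ℝ
  ha : 0 < a
  hbeta : beta ∈ Set.Ioo (1/3 : ℝ) 1
  hmu : mu ∈ Set.Ioo (0 : ℝ) 1
  hw_nonneg : ∀ r, 0 ≤ w r
  hw_bdd : ∃ M, ∀ r, w r ≤ M
  hw_supp : ∀ r, 1 < r → w r = 0
  hjt_deriv : ∀ r, HasDerivAt jt (jt' r) r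
  hjt_zero : jt 0 = 0
  hjt_ode : ∀ r ∈ Set.Ioo 0 mu, HasDerivAt jt' ((1/2) * (mu⁻¹ ^ 2 * w (r / mu)) * jt r) r
  hjt_lin : ∀ r, mu ≤ r → jt r = r - mu * a
  hjt_nonneg : ∀ r, 0 ≤ r → 0 ≤ jt r
  hjt_mono : MonotoneOn jt (Set.Ici 0)
  hjt_le : ∀ r, 0 ≤ r → jt r ≤ r
  hft_deriv : ∀ κ r : ℝ, HasDerivAt (ft κ) (ft' κ r) r
  hft_eq : ∀ κ : ℝ, ∀ r ∈ Set.Icc (0:ℝ) (mu ^ beta), ft κ r = κ * jt r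
  hft_ode : ∀ κ r : ℝ, mu ^ beta < r →
      HasDerivAt (ft' κ) (-(1/2) * a * mu ^ (1 - 3 * beta) * ft κ r) r

/-- A scattering setup together with the tangency parameter `κ_β ∈ (1, μ^β̃/(μ^β̃ - μa))` and the
minimal tangency radius `R_β ∈ (μ^β̃, ∞)` at which `f̃_{κ_β}` is tangent to the line `r ↦ r`. -/
structure TangentScattering extends ScatteringODE where
  hsmall : mu * a < mu ^ beta
  kappa : ℝ
  Rb : ℝ
  hkappa : kappa ∈ Set.Ioo 1 (mu ^ beta / (mu ^ beta - mu * a))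
  hRb : mu ^ beta < Rb
  htan_val : ft kappa Rb = Rb
  htan_der : ft' kappa Rb = 1
  hRb_min : ∀ R : ℝ, mu ^ beta < R → ft kappa R = R → ft' kappa R = 1 → Rb ≤ R

/-- The radial form `f̃` of the scattering solution `f_β`, extended by `f̃(r) = r` for `r ≥ R_β`. -/
noncomputable def TangentScattering.fext (S : TangentScattering) (r : ℝ) : ℝ :=
  if r < S.Rb then S.ft S.kappa r else r

/-- If `f'` is the derivative of `f` everywhere and has a continuous derivative `g` to the right
of `b`, then `f'` is continuous up to `b`. -/
lemma continuousOn_Ici_of_hasDerivAt_hasDerivAt {f f' g : ℝ → ℝ} {b : ℝ}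
    (hf : ∀ r, HasDerivAt f (f' r) r) (hg : Continuous g)
    (hf' : ∀ r, b < r → HasDerivAt f' (g r) r) : ContinuousOn f' (Ici b) := by
  set G : ℝ → ℝ := fun r => ∫ t in b..r, g t
  have hG : ∀ r, HasDerivAt G (g r) r := fun r =>
    intervalIntegral.integral_hasDerivAt_right (hg.intervalIntegrable _ _)
      hg.stronglyMeasurable.stronglyMeasurableAtFilter hg.continuousAt
  have hGcont : Continuous G := continuous_iff_continuousAt.2 fun r => (hG r).continuousAt
  obtain ⟨C, hC⟩ : ∃ C, ∀ r, b < r → f' r = C + G r := by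
    refine ⟨f' (b + 1) - G (b + 1), fun r hr => ?_⟩
    have hd : ∀ x ∈ Ioi b, HasDerivAt (fun r => f' r - G r) 0 x := fun x hx =>
      ((hf' x hx).sub (hG x)).congr_deriv (sub_self _)
    have : f' r - G r = f' (b + 1) - G (b + 1) := isOpen_Ioi.is_const_of_deriv_eq_zero isPreconnected_Ioi
      (fun x hx => (hd x hx).differentiableAt.differentiableWithinAt)
      (fun x hx => (hd x hx).deriv) (show r ∈ Ioi b from hr)
      (show b + 1 ∈ Ioi b from lt_add_one b)
    linarith
  have hcont : Continuous fun r => C + G r := continuous_const.add hGcont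
  have hlim : Filter.Tendsto (deriv f) (nhdsWithin b (Ioi b)) (nhds (C + G b)) := by
    refine Filter.Tendsto.congr' ?_
      (hcont.continuousAt.tendsto.mono_left nhdsWithin_le_nhds)
    filter_upwards [self_mem_nhdsWithin] with r hr
    rw [(hf r).deriv, hC r hr]
  have hright : HasDerivWithinAt f (C + G b) (Ici b) b :=
    hasDerivWithinAt_Ici_of_tendsto_deriv (s := Ioi b)
      (fun x _ => (hf x).differentiableAt.differentiableWithinAt)
      (hf b).continuousAt.continuousWithinAt self_mem_nhdsWithin hlim
  have hb : f' b = C + G b :=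
    (uniqueDiffOn_Ici b b self_mem_Ici).eq_deriv _ (hf b).hasDerivWithinAt hright
  refine hcont.continuousOn.congr fun r hr => ?_
  rcases eq_or_lt_of_le (show b ≤ r from hr) with rfl | h
  · exact hb
  · exact hC r h

/-- Conservation of the energy `f'² + K f²` along solutions of `f'' = -K f`. -/
lemma energy_eq_of_hasDerivAt {f f' : ℝ → ℝ} {b K x y : ℝ}
    (hf : ∀ r, HasDerivAt f (f' r) r) (hf' : ∀ r, b < r → HasDerivAt f' (-K * f r) r)
    (hx : b ≤ x) (hxy : x ≤ y) : f' x ^ 2 + K * f x ^ 2 = f' y ^ 2 + K * f y ^ 2 := by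
  have hfc : Continuous f := continuous_iff_continuousAt.2 fun r => (hf r).continuousAt
  have hc' : ContinuousOn f' (Icc x y) :=
    (continuousOn_Ici_of_hasDerivAt_hasDerivAt hf (hfc.const_mul (-K)) hf').mono
      fun z hz => hx.trans hz.1
  rcases eq_or_lt_of_le hxy with rfl | hlt
  · rfl
  obtain ⟨c, hc, h⟩ := exists_hasDerivAt_eq_slope (fun r => f' r ^ 2 + K * f r ^ 2)
    (fun _ => 0) hlt ((hc'.pow 2).add ((hfc.pow 2).const_mul K).continuousOn)
    (fun z hz => (((hf' z (hx.trans_lt hz.1)).pow 2).add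
      (((hf z).pow 2).const_mul K)).congr_deriv (by push_cast; ring))
  rw [eq_comm, div_eq_zero_iff, or_iff_left (sub_pos.2 hlt).ne'] at h
  linarith

/-- A solution of `f'' = -K f` on `[b, R]` which is tangent to the diagonal at `R`, with `√K R`
small and non-negative value and slope at least `1` at `b`, is non-negative and satisfies
`f ≤ r f'` on the whole interval. -/
lemma nonneg_and_le_mul_deriv_of_tangent {f f' : ℝ → ℝ} {b R K : ℝ} (hb : 0 ≤ b)
    (hK : 0 ≤ K) (hf : ∀ r, HasDerivAt f (f' r) r)
    (hf' : ∀ r, b < r → HasDerivAt f' (-K * f r) r)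
    (hfb : 0 ≤ f b) (hfb' : 1 ≤ f' b) (hR : f R = R) (hR' : f' R = 1)
    (hsmall : K * R ^ 2 ≤ 1 / 4) {r : ℝ} (hr : r ∈ Icc b R) :
    0 ≤ f r ∧ f r ≤ r * f' r := by
  have hfc : Continuous f := continuous_iff_continuousAt.2 fun r => (hf r).continuousAt
  have hc' : ContinuousOn f' (Ici b) :=
    continuousOn_Ici_of_hasDerivAt_hasDerivAt hf (hfc.const_mul (-K)) hf'
  have hcs : ∀ x, b ≤ x → ∀ y, ContinuousOn f' (Icc x y) := fun x hx y =>
    hc'.mono fun z hz => hx.trans hz.1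
  have henergy : ∀ x, b ≤ x → x ≤ R → f' x ^ 2 + K * f x ^ 2 = 1 + K * R ^ 2 := by
    intro x hx hxR
    rw [energy_eq_of_hasDerivAt hf hf' hx hxR, hR, hR', one_pow]
  have hpos : ∀ x, b ≤ x → x ≤ R → 0 ≤ f' x := by
    intro x hx hxR
    rcases eq_or_lt_of_le hx with rfl | hlt
    · linarith
    obtain ⟨c, hc, h⟩ := exists_hasDerivAt_eq_slope f' (fun r => -K * f r) hlt
      (hcs b le_rfl x) (fun y hy => hf' y hy.1)
    rw [eq_div_iff (sub_pos.2 hlt).ne'] at h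
    have he := henergy c hc.1.le (hc.2.le.trans hxR)
    have h1 : K * f c ^ 2 ≤ 5 / 4 := by nlinarith [sq_nonneg (f' c)]
    have h2 : K * (x - b) ^ 2 ≤ 1 / 4 :=
      (mul_le_mul_of_nonneg_left (pow_le_pow_left₀ (sub_pos.2 hlt).le (by linarith) 2) hK).trans
        hsmall
    have h3 : (K * f c * (x - b)) ^ 2 ≤ 5 / 4 * (1 / 4) := by
      calc (K * f c * (x - b)) ^ 2 = (K * f c ^ 2) * (K * (x - b) ^ 2) := by ring
        _ ≤ _ := mul_le_mul h1 h2 (by positivity) (by norm_num)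
    have h4 : K * f c * (x - b) ≤ 1 := by nlinarith
    linarith
  have hmono : MonotoneOn f (Icc b R) :=
    monotoneOn_of_hasDerivWithinAt_nonneg (convex_Icc b R) hfc.continuousOn
      (fun x _ => (hf x).hasDerivWithinAt) fun x hx => by
        rw [interior_Icc] at hx
        exact hpos x hx.1.le hx.2.le
  have hnn : ∀ x ∈ Icc b R, 0 ≤ f x := fun x hx =>
    hfb.trans (hmono ⟨le_rfl, hx.1.trans hx.2⟩ hx hx.1)
  have hanti : AntitoneOn (fun x => x * f' x - f x) (Icc b R) :=
    antitoneOn_of_hasDerivWithinAt_nonpos (f' := fun x => -(x * (K * f x))) (convex_Icc b R)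
      ((continuousOn_id.mul (hcs b le_rfl R)).sub hfc.continuousOn)
      (fun x hx => by
        rw [interior_Icc] at hx
        exact (((hasDerivAt_id' x).mul (hf' x hx.1)).sub (hf x)).congr_deriv
          (by ring) |>.hasDerivWithinAt)
      fun x hx => by
        have hx := interior_subset hx
        have h1 := hnn x hx
        have h2 : 0 ≤ x := hb.trans hx.1
        exact neg_nonpos.2 (by positivity)
  have h := hanti hr ⟨hr.1.trans hr.2, le_rfl⟩ hr.2
  simp only [hR, hR'] at h
  exact ⟨hnn r hr, by linarith⟩

namespace ScatteringODE

variable (S : ScatteringODE)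

lemma jt'_eq_one {r : ℝ} (hr : S.mu ≤ r) : S.jt' r = 1 :=
  (uniqueDiffOn_Ici S.mu r hr).eq_deriv _ (S.hjt_deriv r).hasDerivWithinAt
    (((hasDerivAt_id r).sub_const (S.mu * S.a)).hasDerivWithinAt.congr
      (fun x hx => S.hjt_lin x hx) (S.hjt_lin r hr))

lemma jt_le_mul_jt' {r : ℝ} (hr : 0 < r) : S.jt r ≤ r * S.jt' r := by
  have hmu := S.hmu.1
  rcases le_or_gt S.mu r with h | h
  · rw [S.jt'_eq_one h, S.hjt_lin r h]
    nlinarith [mul_pos hmu S.ha]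
  have hmono : MonotoneOn S.jt' (Ioo 0 S.mu) :=
    monotoneOn_of_hasDerivWithinAt_nonneg (convex_Ioo 0 S.mu)
      (fun x hx => (S.hjt_ode x hx).continuousAt.continuousWithinAt)
      (fun x hx => (S.hjt_ode x (interior_subset hx)).hasDerivWithinAt) fun x hx => by
        have h1 := S.hjt_nonneg x (interior_subset hx).1.le
        have h2 := S.hw_nonneg (x / S.mu)
        positivity
  obtain ⟨c, hc, hslope⟩ := exists_hasDerivAt_eq_slope S.jt S.jt' hr
    (fun x _ => (S.hjt_deriv x).continuousAt.continuousWithinAt) (fun x _ => S.hjt_deriv x)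
  rw [S.hjt_zero, sub_zero, sub_zero, eq_div_iff hr.ne'] at hslope
  have := hmono ⟨hc.1, hc.2.trans h⟩ ⟨hr, h⟩ hc.2.le
  nlinarith

lemma ft'_eq {κ r : ℝ} (hr : r ∈ Icc 0 (S.mu ^ S.beta)) : S.ft' κ r = κ * S.jt' r :=
  (uniqueDiffOn_Icc (Real.rpow_pos_of_pos S.hmu.1 _) r hr).eq_deriv _
    (S.hft_deriv κ r).hasDerivWithinAt
    (((S.hjt_deriv r).const_mul κ).hasDerivWithinAt.congr
      (fun x hx => S.hft_eq κ x hx) (S.hft_eq κ r hr))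

lemma mu_le_rpow_beta : S.mu ≤ S.mu ^ S.beta := by
  simpa using Real.rpow_le_rpow_of_exponent_ge S.hmu.1 S.hmu.2.le S.hbeta.2.le

end ScatteringODE

namespace TangentScattering

variable (S : TangentScattering)

lemma ft_rpow_beta : S.ft S.kappa (S.mu ^ S.beta) = S.kappa * (S.mu ^ S.beta - S.mu * S.a) := by
  rw [S.hft_eq _ _ ⟨(Real.rpow_pos_of_pos S.hmu.1 _).le, le_rfl⟩,
    S.hjt_lin _ S.mu_le_rpow_beta]

lemma ft'_rpow_beta : S.ft' S.kappa (S.mu ^ S.beta) = S.kappa := by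
  rw [S.ft'_eq ⟨(Real.rpow_pos_of_pos S.hmu.1 _).le, le_rfl⟩,
    S.jt'_eq_one S.mu_le_rpow_beta, mul_one]

lemma hft_ode' {r : ℝ} (hr : S.mu ^ S.beta < r) :
    HasDerivAt (S.ft' S.kappa)
      (-(1 / 2 * S.a * S.mu ^ (1 - 3 * S.beta)) * S.ft S.kappa r) r := by
  convert S.hft_ode S.kappa r hr using 1
  ring

/-- Conservation of the energy `f'² + K f²` bounds the tangency radius. -/
lemma mul_Rb_sq_le (h : S.a * S.mu ^ (1 - S.beta) ≤ 1 / 32) :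
    1 / 2 * S.a * S.mu ^ (1 - 3 * S.beta) * S.Rb ^ 2 ≤ 1 / 4 := by
  have hmu := S.hmu.1
  have ha := S.ha
  have hb : 0 < S.mu ^ S.beta := Real.rpow_pos_of_pos hmu _
  have hKb : 1 / 2 * S.a * S.mu ^ (1 - 3 * S.beta) * (S.mu ^ S.beta) ^ 2
      = S.a * S.mu ^ (1 - S.beta) / 2 := by
    have : S.mu ^ (1 - S.beta) = S.mu ^ (1 - 3 * S.beta) * (S.mu ^ S.beta) ^ 2 := by
      rw [← Real.rpow_natCast, ← Real.rpow_mul hmu.le, ← Real.rpow_add hmu]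
      congr 1
      push_cast
      ring
    rw [this]; ring
  have hmub : S.mu = S.mu ^ (1 - S.beta) * S.mu ^ S.beta := by
    rw [← Real.rpow_add hmu]; simp
  have hfb := S.ft_rpow_beta
  have hfb' := S.ft'_rpow_beta
  have hode := fun r (hr : S.mu ^ S.beta < r) => S.hft_ode' hr
  have hK : 0 ≤ 1 / 2 * S.a * S.mu ^ (1 - 3 * S.beta) := by positivity
  have hRb := S.hRb
  have hdiff := sub_pos.2 S.hsmall
  obtain ⟨hk1, hk2⟩ := S.hkappa
  rw [lt_div_iff₀ hdiff] at hk2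
  have hmua : S.mu * S.a ≤ S.mu ^ S.beta / 32 := by
    calc S.mu * S.a = (S.a * S.mu ^ (1 - S.beta)) * S.mu ^ S.beta := by
          conv_lhs => rw [hmub]
          ring
      _ ≤ 1 / 32 * S.mu ^ S.beta := by gcongr
      _ = _ := by ring
  generalize S.mu ^ S.beta = b at *
  generalize 1 / 2 * S.a * S.mu ^ (1 - 3 * S.beta) = K at *
  have hkappa : S.kappa ≤ 32 / 31 := by
    have : S.kappa * (31 / 32 * b) ≤ S.kappa * (b - S.mu * S.a) :=
      mul_le_mul_of_nonneg_left (by linarith) (by linarith)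
    have : (S.kappa * (31 / 32)) * b < 1 * b := by linarith
    have := lt_of_mul_lt_mul_right this hb.le
    linarith
  have hs := energy_eq_of_hasDerivAt (S.hft_deriv S.kappa) hode le_rfl hRb.le
  rw [S.htan_val, S.htan_der, hfb, hfb'] at hs
  have hle : K * (S.kappa * (b - S.mu * S.a)) ^ 2 ≤ K * b ^ 2 :=
    mul_le_mul_of_nonneg_left (pow_le_pow_left₀ (by positivity) hk2.le 2) hK
  have hksq : S.kappa ^ 2 ≤ (32 / 31) ^ 2 := pow_le_pow_left₀ (by linarith) hkappa 2
  norm_num at hksq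
  linarith

/-- On `(0, R_β]` the function `f̃` is non-negative and lies below `r f̃'`, so that `f̃ / r` increases. -/
lemma ft_nonneg_and_le_mul_ft' (h : S.a * S.mu ^ (1 - S.beta) ≤ 1 / 32) {r : ℝ} (hr : 0 < r)
    (hrR : r ≤ S.Rb) : 0 ≤ S.ft S.kappa r ∧ S.ft S.kappa r ≤ r * S.ft' S.kappa r := by
  have hmu := S.hmu.1
  have ha := S.ha
  have hb : 0 < S.mu ^ S.beta := Real.rpow_pos_of_pos hmu _
  have hk : 0 < S.kappa := by linarith [S.hkappa.1]
  rcases le_or_gt r (S.mu ^ S.beta) with hrb | hrb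
  · rw [S.hft_eq _ _ ⟨hr.le, hrb⟩, S.ft'_eq ⟨hr.le, hrb⟩]
    refine ⟨mul_nonneg hk.le (S.hjt_nonneg r hr.le), ?_⟩
    calc S.kappa * S.jt r ≤ S.kappa * (r * S.jt' r) :=
          mul_le_mul_of_nonneg_left (S.jt_le_mul_jt' hr) hk.le
      _ = _ := by ring
  · refine nonneg_and_le_mul_deriv_of_tangent hb.le (by positivity) (S.hft_deriv S.kappa)
      (fun x hx => S.hft_ode' hx) ?_ ?_ S.htan_val S.htan_der (S.mul_Rb_sq_le h) ⟨hrb.le, hrR⟩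
    · rw [S.ft_rpow_beta]
      exact mul_nonneg hk.le (sub_pos.2 S.hsmall).le
    · rw [S.ft'_rpow_beta]
      exact S.hkappa.1.le

lemma monotoneOn_ft_div (h : S.a * S.mu ^ (1 - S.beta) ≤ 1 / 32) :
    MonotoneOn (fun r => S.ft S.kappa r / r) (Ioc 0 S.Rb) := by
  have hd : ∀ x ∈ Ioc 0 S.Rb, HasDerivAt (fun r => S.ft S.kappa r / r)
      ((S.ft' S.kappa x * x - S.ft S.kappa x * 1) / x ^ 2) x := fun x hx =>
    (S.hft_deriv S.kappa x).div (hasDerivAt_id' x) hx.1.ne'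
  refine monotoneOn_of_hasDerivWithinAt_nonneg (convex_Ioc 0 S.Rb)
    (fun x hx => (hd x hx).continuousAt.continuousWithinAt)
    (fun x hx => (hd x (interior_subset hx)).hasDerivWithinAt) fun x hx => ?_
  have hx := interior_subset hx
  have := (S.ft_nonneg_and_le_mul_ft' h hx.1 hx.2).2
  exact div_nonneg (by linarith) (sq_nonneg x)

end TangentScattering

/-- The function `f_β(z) = f̃(|z|)/|z|` is non-negative, bounded by `1`, and non-decreasing in
`|z|`: for all `0 < r₁ ≤ r₂` one has `0 ≤ f̃(r₁)/r₁ ≤ f̃(r₂)/r₂ ≤ 1`. -/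
theorem fbeta_nonneg_monotone_le_one (a beta : ℝ) (ha : 0 < a)
    (hbeta : beta ∈ Set.Ioo (1/3 : ℝ) 1) :
    ∃ μ₀ > (0:ℝ), ∀ S : TangentScattering, S.a = a → S.beta = beta → S.mu ≤ μ₀ →
      ∀ r₁ r₂ : ℝ, 0 < r₁ → r₁ ≤ r₂ →
        0 ≤ S.fext r₁ / r₁ ∧ S.fext r₁ / r₁ ≤ S.fext r₂ / r₂ ∧ S.fext r₂ / r₂ ≤ 1 := by
  have hexp : 0 < 1 - beta := sub_pos.2 hbeta.2
  refine ⟨(1 / (32 * a)) ^ (1 - beta)⁻¹, by positivity, ?_⟩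
  rintro S rfl rfl hmu r₁ r₂ hr₁ hr
  have hsmall : S.a * S.mu ^ (1 - S.beta) ≤ 1 / 32 := by
    have hpow : S.mu ^ (1 - S.beta) ≤ 1 / (32 * S.a) := by
      calc S.mu ^ (1 - S.beta)
          ≤ ((1 / (32 * S.a)) ^ (1 - S.beta)⁻¹) ^ (1 - S.beta) :=
            Real.rpow_le_rpow S.hmu.1.le hmu hexp.le
        _ = _ := Real.rpow_inv_rpow (by positivity) hexp.ne'
    calc S.a * S.mu ^ (1 - S.beta) ≤ S.a * (1 / (32 * S.a)) := by gcongr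
      _ = 1 / 32 := by field_simp
  have hR : 0 < S.Rb := (Real.rpow_pos_of_pos S.hmu.1 _).trans S.hRb
  have hmono := S.monotoneOn_ft_div hsmall
  have hle : ∀ r, 0 < r → r < S.Rb → S.ft S.kappa r / r ≤ 1 := fun r h0 h => by
    simpa [S.htan_val, hR.ne'] using hmono ⟨h0, h.le⟩ ⟨hR, le_rfl⟩ h.le
  have hnn : ∀ r, 0 < r → r < S.Rb → 0 ≤ S.ft S.kappa r / r := fun r h0 h =>
    div_nonneg (S.ft_nonneg_and_le_mul_ft' hsmall h0 h.le).1 h0.le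
  have hr₂ := hr₁.trans_le hr
  unfold TangentScattering.fext
  split_ifs with h1 h2 h2
  · exact ⟨hnn r₁ hr₁ h1, hmono ⟨hr₁, h1.le⟩ ⟨hr₂, h2.le⟩ hr, hle r₂ hr₂ h2⟩
  · rw [div_self hr₂.ne']
    exact ⟨hnn r₁ hr₁ h1, hle r₁ hr₁ h1, le_rfl⟩
  · exact absurd (hr.trans_lt h2) h1
  · rw [div_self hr₂.ne', div_self hr₁.ne']
    exact ⟨zero_le_one, le_rfl, le_rfl⟩
end

section
/- One has f̃(r) ≥ j̃(r) for all r ≥ 0, i.e. f_β(z) ≥ j_μ(z) pointwise, where j_μ(z) := j̃(|z|)/|z|. Consequently, the function g_β := 1 − f_β satisfies 0 ≤ g_β(z) ≤ μa/|z| for all z ≠ 0, and g_β(z) = 0 for |z| ≥ R_β. -/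
open Set

/-- The scattering solution `f_β(z) = f̃(|z|)/|z|` (for `z ≠ 0`). -/
noncomputable def TangentScattering.fbeta (S : TangentScattering)
    (z : EuclideanSpace ℝ (Fin 3)) : ℝ :=
  S.fext ‖z‖ / ‖z‖

/-- Its complement `g_β = 1 - f_β`. -/
noncomputable def TangentScattering.gbeta (S : TangentScattering)
    (z : EuclideanSpace ℝ (Fin 3)) : ℝ :=
  1 - S.fbeta z

/-- Energy conservation for the harmonic oscillator `f'' = -c f`. -/
lemma oscillator_energy_const {f f' : ℝ → ℝ} {c x y : ℝ}
    (hf : ∀ r, HasDerivAt f (f' r) r)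
    (hf' : ∀ r ∈ Icc x y, HasDerivAt f' (-c * f r) r) :
    ∀ r ∈ Icc x y, f' r ^ 2 + c * f r ^ 2 = f' x ^ 2 + c * f x ^ 2 := by
  have hE : ∀ r ∈ Icc x y, HasDerivAt (fun s => f' s ^ 2 + c * f s ^ 2) 0 r := by
    intro r hr
    refine (((hf' r hr).fun_pow 2).fun_add (((hf r).fun_pow 2).const_mul c)).congr_deriv ?_
    norm_num
    ring
  exact constant_of_has_deriv_right_zero
    (fun r hr => (hE r hr).continuousAt.continuousWithinAt)
    (fun r hr => (hE r (Ico_subset_Icc_self hr)).hasDerivWithinAt)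

/-- If `f` is differentiable everywhere, then arbitrarily close to the right of `x` there are points
where the derivative is arbitrarily close to its value at `x`. -/
lemma exists_deriv_mem_Ioo_right {f f' : ℝ → ℝ} {x y l u : ℝ}
    (hf : ∀ r, HasDerivAt f (f' r) r) (hxy : x < y) (hl : l < f' x) (hu : f' x < u) :
    ∃ ξ ∈ Ioo x y, f' ξ ∈ Ioo l u := by
  have hslope := (hasDerivAt_iff_tendsto_slope.1 (hf x)).mono_left
    (nhdsWithin_mono x (fun r (hr : r ∈ Ioi x) => ne_of_gt hr))
  obtain ⟨r, hr, hxr⟩ := ((hslope.eventually (Ioo_mem_nhds hl hu)).and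
    (Ioo_mem_nhdsGT hxy)).exists
  obtain ⟨ξ, hξ, h⟩ := exists_hasDerivAt_eq_slope f f' hxr.1
    (fun s _ => (hf s).continuousAt.continuousWithinAt) (fun s _ => hf s)
  rw [slope_def_field, ← h] at hr
  exact ⟨ξ, ⟨hξ.1, hξ.2.trans hxr.2⟩, hr⟩

/-- A solution of `f'' = -c f` of low energy which starts out positive with slope larger than `1`
stays positive up to any point of tangency with the diagonal. -/
lemma oscillator_pos_of_tangent {f f' : ℝ → ℝ} {c ρ R : ℝ}
    (hf : ∀ r, HasDerivAt f (f' r) r) (hf' : ∀ r, ρ < r → HasDerivAt f' (-c * f r) r)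
    (hc : 0 < c) (hρ : 0 < ρ) (hρR : ρ < R) (hpos : 0 < f ρ) (hlt : f ρ < ρ)
    (hd : 1 < f' ρ) (hd' : f' ρ < 28 / 25) (hcρ : c * ρ ^ 2 ≤ 1 / 20)
    (hR : f R = R) (hR' : f' R = 1) : ∀ r ∈ Icc ρ R, 0 < f r := by
  obtain ⟨δ, hδ, hball⟩ := Metric.eventually_nhds_iff_ball.1
    ((hf ρ).continuousAt.eventually (Ioo_mem_nhds hpos hlt))
  obtain ⟨ξ, hξ, hξd⟩ := exists_deriv_mem_Ioo_right hf
    (lt_min (lt_add_of_pos_right ρ hδ) hρR) hd hd'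
  have hξδ : ξ < ρ + δ := hξ.2.trans_le (min_le_left _ _)
  have hξR : ξ < R := hξ.2.trans_le (min_le_right _ _)
  have hnear : ∀ r ∈ Icc ρ ξ, f r ∈ Ioo 0 ρ := fun r hr => hball r (by
    rw [Metric.mem_ball, Real.dist_eq, abs_lt]
    constructor <;> linarith [hr.1, hr.2])
  have hfξ := hnear ξ (right_mem_Icc.2 hξ.1.le)
  have hode : ∀ r ∈ Icc ξ R, HasDerivAt f' (-c * f r) r :=
    fun r hr => hf' r (hξ.1.trans_le hr.1)
  set E := f' ξ ^ 2 + c * f ξ ^ 2 with hE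
  have hconst : ∀ r ∈ Icc ξ R, f' r ^ 2 + c * f r ^ 2 = E := oscillator_energy_const hf hode
  have hER : 1 + c * R ^ 2 = E := by
    simpa [hR, hR'] using hconst R (right_mem_Icc.2 hξR.le)
  have hEle : E ≤ 131 / 100 := by
    have h1 : f' ξ ^ 2 ≤ (28 / 25) ^ 2 :=
      pow_le_pow_left₀ (by linarith [hξd.1]) hξd.2.le 2
    have h2 : c * f ξ ^ 2 ≤ c * ρ ^ 2 :=
      mul_le_mul_of_nonneg_left (pow_le_pow_left₀ hfξ.1.le hfξ.2.le 2) hc.le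
    norm_num at h1
    linarith
  have hcR : 0 < c * R ^ 2 := mul_pos hc (pow_pos (hρ.trans hρR) 2)
  have hEpos : 0 < E := by linarith
  set M := √(c * E) with hM
  have hMsq : M ^ 2 = c * E := Real.sq_sqrt (mul_pos hc hEpos).le
  have hM0 : 0 ≤ M := Real.sqrt_nonneg _
  have hMR : M * R < 1 := by
    have h : (M * R) ^ 2 < 1 ^ 2 := by
      have : (M * R) ^ 2 = (E - 1) * E := by rw [mul_pow, hMsq, ← hER]; ring
      rw [this]
      nlinarith
    exact lt_of_pow_lt_pow_left₀ 2 zero_le_one h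
  have hforce : ∀ r ∈ Icc ξ R, c * f r ≤ M := by
    intro r hr
    apply Real.le_sqrt_of_sq_le
    nlinarith [hconst r hr, sq_nonneg (f' r), mul_nonneg hc.le (sq_nonneg (f' r))]
  have hmono : MonotoneOn (fun r => f' r + M * r) (Icc ξ R) := by
    have hder : ∀ r ∈ Icc ξ R, HasDerivAt (fun r => f' r + M * r) (-c * f r + M * 1) r :=
      fun r hr => (hode r hr).fun_add ((hasDerivAt_id' r).const_mul M)
    refine monotoneOn_of_hasDerivWithinAt_nonneg (convex_Icc _ _)
      (fun r hr => (hder r hr).continuousAt.continuousWithinAt)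
      (fun r hr => (hder r (interior_subset hr)).hasDerivWithinAt) (fun r hr => ?_)
    linarith [hforce r (interior_subset hr)]
  have hderiv_pos : ∀ r ∈ Icc ξ R, 0 ≤ f' r := by
    intro r hr
    have h : f' ξ + M * ξ ≤ f' r + M * r := hmono (left_mem_Icc.2 hξR.le) hr hr.1
    have h1 : M * r ≤ M * R := mul_le_mul_of_nonneg_left hr.2 hM0
    have h2 : 0 ≤ M * ξ := mul_nonneg hM0 (hρ.trans hξ.1).le
    linarith [hξd.1]
  have hfmono : MonotoneOn f (Icc ξ R) :=
    monotoneOn_of_hasDerivWithinAt_nonneg (convex_Icc _ _)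
      (fun r _ => (hf r).continuousAt.continuousWithinAt)
      (fun r _ => (hf r).hasDerivWithinAt) (fun r hr => hderiv_pos r (interior_subset hr))
  intro r hr
  rcases le_total r ξ with h | h
  · exact (hnear r ⟨hr.1, h⟩).1
  · exact hfξ.1.trans_le (hfmono (left_mem_Icc.2 hξR.le) ⟨h, hr.2⟩ h)

namespace ScatteringODE

variable (S : ScatteringODE)

lemma mu_lt_rpow : S.mu < S.mu ^ S.beta := by
  simpa using Real.rpow_lt_rpow_of_exponent_gt S.hmu.1 S.hmu.2 S.hbeta.2

lemma hasDerivAt_jt_of_mu_lt {r : ℝ} (hr : S.mu < r) : HasDerivAt S.jt 1 r :=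
  ((hasDerivAt_id' r).sub_const (S.mu * S.a)).congr_of_eventuallyEq
    ((eventually_gt_nhds hr).mono fun _ hs => S.hjt_lin _ hs.le)

lemma hasDerivAt_jt_mu : HasDerivAt S.jt 1 S.mu := by
  have h1 : HasDerivWithinAt S.jt 1 (Ici S.mu) S.mu :=
    ((hasDerivAt_id' S.mu).sub_const (S.mu * S.a)).hasDerivWithinAt.congr
      (fun _ hs => S.hjt_lin _ hs) (S.hjt_lin _ le_rfl)
  have h2 := (uniqueDiffOn_Ici S.mu S.mu self_mem_Ici).eq_deriv _ h1
    (S.hjt_deriv S.mu).hasDerivWithinAt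
  exact h2 ▸ S.hjt_deriv S.mu

lemma convexOn_jt : ConvexOn ℝ (Icc 0 S.mu) S.jt := by
  refine convexOn_of_hasDerivWithinAt2_nonneg (convex_Icc _ _)
    (fun r _ => (S.hjt_deriv r).continuousAt.continuousWithinAt)
    (fun r _ => (S.hjt_deriv r).hasDerivWithinAt)
    (f'' := fun r => (1/2) * (S.mu⁻¹ ^ 2 * S.w (r / S.mu)) * S.jt r) ?_ ?_ <;>
    rw [interior_Icc]
  · exact fun r hr => (S.hjt_ode r hr).hasDerivWithinAt
  · intro r hr
    have := S.hw_nonneg (r / S.mu)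
    have := S.hjt_nonneg r hr.1.le
    positivity

/-- The scattering solution lies above its asymptote. -/
lemma sub_le_jt {r : ℝ} (hr : 0 ≤ r) : r - S.mu * S.a ≤ S.jt r := by
  rcases lt_or_ge r S.mu with h | h
  · have hs := S.convexOn_jt.slope_le_of_hasDerivAt ⟨hr, h.le⟩
      (right_mem_Icc.2 S.hmu.1.le) h S.hasDerivAt_jt_mu
    rw [slope_def_field, div_le_one (sub_pos.2 h), S.hjt_lin _ le_rfl] at hs
    linarith
  · exact (S.hjt_lin r h).ge

/-- The ratio `j̃(r) / r` on `[0, x]` is at most its value at the right end point `x ≥ μ`. -/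
lemma mul_jt_le {r x : ℝ} (hr : 0 ≤ r) (hrx : r ≤ x) (hx : S.mu ≤ x) :
    x * S.jt r ≤ r * S.jt x := by
  have hmu := S.hmu.1
  have hma : 0 < S.mu * S.a := mul_pos hmu S.ha
  rcases le_total r S.mu with h | h
  · have hc := S.convexOn_jt.2 (left_mem_Icc.2 hmu.le) (right_mem_Icc.2 hmu.le)
      (sub_nonneg.2 ((div_le_one hmu).2 h)) (div_nonneg hr hmu.le) (sub_add_cancel _ _)
    simp only [smul_eq_mul, mul_zero, zero_add, S.hjt_zero, div_mul_cancel₀ _ hmu.ne',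
      S.hjt_lin _ le_rfl] at hc
    have hj : S.jt r ≤ r * (1 - S.a) :=
      hc.trans_eq (by field_simp)
    rw [S.hjt_lin x hx]
    have h1 := mul_le_mul_of_nonneg_left hj (hmu.le.trans hx)
    have h2 : r * (S.mu * S.a) ≤ r * (x * S.a) :=
      mul_le_mul_of_nonneg_left (mul_le_mul_of_nonneg_right hx S.ha.le) hr
    linarith
  · rw [S.hjt_lin r h, S.hjt_lin x hx]
    nlinarith

/-- At the matching radius `μ^β̃` the slope of `f̃_κ` is `κ`. -/
lemma ft'_rpow (κ : ℝ) : S.ft' κ (S.mu ^ S.beta) = κ := by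
  have hρ : 0 < S.mu ^ S.beta := Real.rpow_pos_of_pos S.hmu.1 _
  have hmem : S.mu ^ S.beta ∈ Icc 0 (S.mu ^ S.beta) := right_mem_Icc.2 hρ.le
  have h1 : HasDerivWithinAt (S.ft κ) (κ * 1) (Icc 0 (S.mu ^ S.beta)) (S.mu ^ S.beta) :=
    ((S.hasDerivAt_jt_of_mu_lt S.mu_lt_rpow).const_mul κ).hasDerivWithinAt.congr
      (S.hft_eq κ) (S.hft_eq κ _ hmem)
  simpa using (uniqueDiffOn_Icc hρ _ hmem).eq_deriv _ (S.hft_deriv κ _).hasDerivWithinAt h1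

end ScatteringODE

namespace TangentScattering

variable (S : TangentScattering)

lemma kappa_mul_jt_lt : S.kappa * S.jt (S.mu ^ S.beta) < S.mu ^ S.beta := by
  rw [S.hjt_lin _ S.mu_lt_rpow.le]
  exact (lt_div_iff₀ (sub_pos.2 S.hsmall)).1 S.hkappa.2

lemma ft_pos (hμ : S.a * S.mu ^ (1 - S.beta) ≤ 1 / 10) :
    ∀ r ∈ Icc (S.mu ^ S.beta) S.Rb, 0 < S.ft S.kappa r := by
  have hmu := S.hmu.1
  have hρ : 0 < S.mu ^ S.beta := Real.rpow_pos_of_pos hmu _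
  have hjρ : S.jt (S.mu ^ S.beta) = S.mu ^ S.beta - S.mu * S.a := S.hjt_lin _ S.mu_lt_rpow.le
  have hfρ : S.ft S.kappa (S.mu ^ S.beta) = S.kappa * S.jt (S.mu ^ S.beta) :=
    S.hft_eq _ _ (right_mem_Icc.2 hρ.le)
  have hsplit : S.mu = S.mu ^ (1 - S.beta) * S.mu ^ S.beta := by
    rw [← Real.rpow_add hmu, sub_add_cancel, Real.rpow_one]
  have hma : S.mu * S.a ≤ S.mu ^ S.beta / 10 := by
    have h := mul_le_mul_of_nonneg_right hμ hρ.le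
    have h2 : S.mu * S.a = S.a * S.mu ^ (1 - S.beta) * S.mu ^ S.beta := by
      rw [mul_assoc, ← hsplit, mul_comm]
    linarith
  have hκ := S.kappa_mul_jt_lt
  have hκ1 := S.hkappa.1
  refine oscillator_pos_of_tangent (c := (1/2) * S.a * S.mu ^ (1 - 3 * S.beta))
    (S.hft_deriv _) (fun r hr => ?_) ?_ hρ S.hRb ?_ ?_ ?_ ?_ ?_ S.htan_val S.htan_der
  · convert S.hft_ode S.kappa r hr using 1
    ring
  · have := S.ha
    positivity
  · rw [hfρ, hjρ]
    exact mul_pos (zero_lt_one.trans hκ1) (sub_pos.2 S.hsmall)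
  · rwa [hfρ]
  · rwa [S.ft'_rpow]
  · rw [S.ft'_rpow]
    by_contra! h
    rw [hjρ] at hκ
    nlinarith
  · have h : S.mu ^ (1 - 3 * S.beta) * (S.mu ^ S.beta) ^ 2 = S.mu ^ (1 - S.beta) := by
      rw [← Real.rpow_natCast, ← Real.rpow_mul hmu.le, ← Real.rpow_add hmu]
      congr 1
      push_cast
      ring
    rw [mul_assoc, h]
    linarith

lemma concaveOn_ft (hμ : S.a * S.mu ^ (1 - S.beta) ≤ 1 / 10) :
    ConcaveOn ℝ (Icc (S.mu ^ S.beta) S.Rb) (S.ft S.kappa) := by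
  refine concaveOn_of_hasDerivWithinAt2_nonpos (convex_Icc _ _)
    (fun r _ => (S.hft_deriv _ r).continuousAt.continuousWithinAt)
    (fun r _ => (S.hft_deriv _ r).hasDerivWithinAt)
    (f'' := fun r => -(1/2) * S.a * S.mu ^ (1 - 3 * S.beta) * S.ft S.kappa r) ?_ ?_ <;>
    rw [interior_Icc]
  · exact fun r hr => (S.hft_ode _ r hr.1).hasDerivWithinAt
  · intro r hr
    have h1 := S.ft_pos hμ r (Ioo_subset_Icc_self hr)
    have h2 := S.ha
    have h3 : 0 < S.mu ^ (1 - 3 * S.beta) := Real.rpow_pos_of_pos S.hmu.1 _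
    have : 0 < (1/2) * S.a * S.mu ^ (1 - 3 * S.beta) * S.ft S.kappa r := by positivity
    linarith

lemma fext_le (hμ : S.a * S.mu ^ (1 - S.beta) ≤ 1 / 10) {r : ℝ} (hr : 0 ≤ r) :
    S.fext r ≤ r := by
  unfold fext
  split_ifs with hR
  · rcases le_total r (S.mu ^ S.beta) with h | h
    · rw [S.hft_eq _ _ ⟨hr, h⟩]
      have hρ : 0 < S.mu ^ S.beta := Real.rpow_pos_of_pos S.hmu.1 _
      refine le_of_mul_le_mul_left ?_ hρ
      calc S.mu ^ S.beta * (S.kappa * S.jt r) = S.kappa * (S.mu ^ S.beta * S.jt r) := by ring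
        _ ≤ S.kappa * (r * S.jt (S.mu ^ S.beta)) :=
          mul_le_mul_of_nonneg_left (S.mul_jt_le hr h S.mu_lt_rpow.le)
            (zero_lt_one.trans S.hkappa.1).le
        _ = r * (S.kappa * S.jt (S.mu ^ S.beta)) := by ring
        _ ≤ r * S.mu ^ S.beta := mul_le_mul_of_nonneg_left S.kappa_mul_jt_lt.le hr
        _ = S.mu ^ S.beta * r := mul_comm _ _
    · have hs := (S.concaveOn_ft hμ).le_slope_of_hasDerivAt ⟨h, hR.le⟩
        (right_mem_Icc.2 S.hRb.le) hR (S.hft_deriv _ S.Rb)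
      rw [S.htan_der, slope_def_field, one_le_div (sub_pos.2 hR), S.htan_val] at hs
      linarith
  · exact le_rfl

lemma jt_le_fext (hμ : S.a * S.mu ^ (1 - S.beta) ≤ 1 / 10) {r : ℝ} (hr : 0 ≤ r) :
    S.jt r ≤ S.fext r := by
  unfold fext
  split_ifs with hR
  · rcases le_total r (S.mu ^ S.beta) with h | h
    · rw [S.hft_eq _ _ ⟨hr, h⟩]
      exact le_mul_of_one_le_left (S.hjt_nonneg r hr) S.hkappa.1.le
    · have hρ : 0 < S.mu ^ S.beta := Real.rpow_pos_of_pos S.hmu.1 _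
      have hconc : ConcaveOn ℝ (Icc (S.mu ^ S.beta) S.Rb) (fun s => S.ft S.kappa s - s) :=
        (S.concaveOn_ft hμ).sub (convexOn_id (convex_Icc _ _))
      have hmin := hconc.min_le_of_mem_Icc (left_mem_Icc.2 S.hRb.le)
        (right_mem_Icc.2 S.hRb.le) ⟨h, hR.le⟩
      have hma : 0 < S.mu * S.a := mul_pos S.hmu.1 S.ha
      have hleft : -(S.mu * S.a) ≤ S.ft S.kappa (S.mu ^ S.beta) - S.mu ^ S.beta := by
        rw [S.hft_eq _ _ (right_mem_Icc.2 hρ.le)]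
        have h1 := le_mul_of_one_le_left (S.hjt_nonneg _ hρ.le) S.hkappa.1.le
        have h2 := S.hjt_lin _ S.mu_lt_rpow.le
        linarith
      have hright : -(S.mu * S.a) ≤ S.ft S.kappa S.Rb - S.Rb := by
        rw [S.htan_val]
        linarith
      rw [S.hjt_lin r (S.mu_lt_rpow.le.trans h)]
      linarith [(le_min hleft hright).trans hmin]
  · exact S.hjt_le r hr

end TangentScattering

/-- `f̃ ≥ j̃`, i.e. `f_β ≥ j_μ` pointwise (where `j_μ(z) = j̃(|z|)/|z|`); consequently
`0 ≤ g_β(z) ≤ μa/|z|` for all `z ≠ 0`, and `g_β(z) = 0` for `|z| ≥ R_β`. -/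
theorem fbeta_ge_scattering_sol (a beta : ℝ) (ha : 0 < a)
    (hbeta : beta ∈ Set.Ioo (1/3 : ℝ) 1) :
    ∃ μ₀ > (0:ℝ), ∀ S : TangentScattering, S.a = a → S.beta = beta → S.mu ≤ μ₀ →
      (∀ r : ℝ, 0 ≤ r → S.jt r ≤ S.fext r) ∧
      (∀ z : EuclideanSpace ℝ (Fin 3), z ≠ 0 → S.jt ‖z‖ / ‖z‖ ≤ S.fbeta z) ∧
      (∀ z : EuclideanSpace ℝ (Fin 3), z ≠ 0 →
        0 ≤ S.gbeta z ∧ S.gbeta z ≤ S.mu * S.a / ‖z‖) ∧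
      (∀ z : EuclideanSpace ℝ (Fin 3), z ≠ 0 → S.Rb ≤ ‖z‖ → S.gbeta z = 0) := by
  have hb : 0 < 1 - beta := sub_pos.2 hbeta.2
  have hpos : 0 < 1 / (10 * a) := by positivity
  refine ⟨(1 / (10 * a)) ^ (1 - beta)⁻¹, Real.rpow_pos_of_pos hpos _, ?_⟩
  rintro S rfl rfl hS
  have hμ : S.a * S.mu ^ (1 - S.beta) ≤ 1 / 10 := by
    have h := Real.rpow_le_rpow S.hmu.1.le hS hb.le
    rw [Real.rpow_inv_rpow hpos.le hb.ne'] at h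
    calc S.a * S.mu ^ (1 - S.beta) ≤ S.a * (1 / (10 * S.a)) :=
          mul_le_mul_of_nonneg_left h ha.le
      _ = 1 / 10 := by field_simp
  refine ⟨fun r hr => S.jt_le_fext hμ hr, fun z _ => ?_, fun z hz => ?_, fun z hz hR => ?_⟩
  · exact div_le_div_of_nonneg_right (S.jt_le_fext hμ (norm_nonneg z)) (norm_nonneg z)
  · have hz' : 0 < ‖z‖ := norm_pos_iff.2 hz
    have hg : S.gbeta z = (‖z‖ - S.fext ‖z‖) / ‖z‖ := by
      rw [TangentScattering.gbeta, TangentScattering.fbeta, sub_div, div_self hz'.ne']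
    rw [hg]
    have hle := S.fext_le hμ hz'.le
    have hge := (S.sub_le_jt hz'.le).trans (S.jt_le_fext hμ hz'.le)
    exact ⟨div_nonneg (sub_nonneg.2 hle) hz'.le,
      div_le_div_of_nonneg_right (by linarith) hz'.le⟩
  · rw [TangentScattering.gbeta, TangentScattering.fbeta, TangentScattering.fext,
      if_neg hR.not_gt, div_self (norm_ne_zero_iff.2 hz), sub_self]
end

section
/- There is a universal constant C such that for every integer N ≥ 2, every ε ∈ (0,1], every R > 0 and every ψ ∈ C_c^∞((ℝ³)^N; ℂ): ∫ 1_{{|z₁ − z₂| ≤ R}} |ψ|² dz ≤ C R² ε^{−4/3} ( ‖∂_{x₁} ψ‖² + ε² ‖∇_{y₁} ψ‖² ). -/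
open MeasureTheory
open Module (finrank)

lemma eLpNorm_two_toReal_sq {α F : Type*} [MeasurableSpace α] [NormedAddCommGroup F]
    {μ : Measure α} {f : α → F} (hf : MemLp f 2 μ) :
    (eLpNorm f 2 μ).toReal ^ 2 = ∫ x, ‖f x‖ ^ 2 ∂μ := by
  rw [hf.eLpNorm_eq_integral_rpow_norm (by norm_num) (by norm_num)]
  have h0 : 0 ≤ ∫ x, ‖f x‖ ^ 2 ∂μ := integral_nonneg fun _ => by positivity
  simp only [ENNReal.toReal_ofNat, Real.rpow_ofNat]
  rw [ENNReal.toReal_ofReal (by positivity), ← Real.rpow_natCast, ← Real.rpow_mul h0]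
  norm_num

/-- The Sobolev inequality in dimension three after a linear change of variables `A`. -/
lemma eLpNorm_six_le_eLpNorm_fderiv_comp {E F : Type*} [NormedAddCommGroup E] [NormedSpace ℝ E]
    [MeasurableSpace E] [BorelSpace E] [FiniteDimensional ℝ E]
    [NormedAddCommGroup F] [NormedSpace ℝ F] [FiniteDimensional ℝ F]
    (μ : Measure E) [μ.IsAddHaarMeasure] (hE : finrank ℝ E = 3) {f : E → F} (hf : ContDiff ℝ 1 f)
    (hfc : HasCompactSupport f) (A : E ≃L[ℝ] E) :
    eLpNorm f 6 μ ≤ SNormLESNormFDerivOfEqConst F μ 2 *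
      ENNReal.ofReal |(LinearMap.det (A : E →ₗ[ℝ] E))⁻¹| ^ (1 / 3 : ℝ) *
        eLpNorm (fun v => (fderiv ℝ f v).comp (A : E →L[ℝ] E)) 2 μ := by
  set c := ENNReal.ofReal |(LinearMap.det (A : E →ₗ[ℝ] E))⁻¹| with hc
  have hdet : LinearMap.det (A : E →ₗ[ℝ] E) ≠ 0 := A.toLinearEquiv.isUnit_det'.ne_zero
  have hc0 : c ≠ 0 := by simpa [hc] using hdet
  have hct : c ≠ ⊤ := ENNReal.ofReal_ne_top
  have hmap : μ.map A = c • μ := Measure.map_linearMap_addHaar_eq_smul_addHaar μ hdet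
  have hA : AEMeasurable A μ := A.continuous.aemeasurable
  have hderiv : fderiv ℝ (f ∘ A) = (fun v => (fderiv ℝ f v).comp (A : E →L[ℝ] E)) ∘ A := by
    ext1 x
    exact A.comp_right_fderiv
  have hcont : Continuous fun v => (fderiv ℝ f v).comp (A : E →L[ℝ] E) :=
    (hf.continuous_fderiv one_ne_zero).clm_comp continuous_const
  have key := eLpNorm_le_eLpNorm_fderiv_of_eq (F := F) μ (p := 2) (p' := 6)
    (hf.comp A.contDiff) (hfc.comp_homeomorph A.toHomeomorph) (by norm_num) (by omega)
    (by rw [hE]; norm_num)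
  rw [hderiv] at key
  simp only [ENNReal.coe_ofNat, NNReal.coe_ofNat] at key
  rw [← eLpNorm_map_measure hf.continuous.aestronglyMeasurable hA,
    ← eLpNorm_map_measure hcont.aestronglyMeasurable hA, hmap,
    eLpNorm_smul_measure_of_ne_zero hc0, eLpNorm_smul_measure_of_ne_zero hc0] at key
  have h6 : c ^ ((1 / 6 : ENNReal)).toReal ≠ 0 := by simp [hc0, hct]
  have h6' : c ^ ((1 / 6 : ENNReal)).toReal ≠ ⊤ :=
    ENNReal.rpow_ne_top_of_ne_zero hc0 hct
  refine (ENNReal.mul_le_mul_iff_right h6 h6').1 (key.trans (le_of_eq ?_))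
  have : c ^ (1 / 2 : ENNReal).toReal = c ^ (1 / 6 : ENNReal).toReal * c ^ (1 / 3 : ℝ) := by
    rw [← ENNReal.rpow_add _ _ hc0 hct]
    norm_num
  rw [this, smul_eq_mul]
  ring

lemma eLpNorm_two_closedBall_le {E F : Type*} [NormedAddCommGroup E] [NormedSpace ℝ E]
    [MeasurableSpace E] [BorelSpace E] [FiniteDimensional ℝ E] [NormedAddCommGroup F]
    (μ : Measure E) [μ.IsAddHaarMeasure] (hE : finrank ℝ E = 3) {f : E → F}
    (hf : AEStronglyMeasurable f μ) (a : E) {R : ℝ} (hR : 0 ≤ R) :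
    eLpNorm f 2 (μ.restrict (Metric.closedBall a R)) ≤
      eLpNorm f 6 μ * (ENNReal.ofReal R * μ (Metric.ball 0 1) ^ (1 / 3 : ℝ)) := by
  refine (eLpNorm_le_eLpNorm_mul_rpow_measure_univ (q := 6) (by norm_num) hf.restrict).trans ?_
  gcongr
  · exact Measure.restrict_le_self
  · rw [Measure.restrict_apply_univ, Measure.addHaar_closedBall _ _ hR, hE,
      ENNReal.mul_rpow_of_nonneg _ _ (by norm_num), ENNReal.ofReal_pow hR, ← ENNReal.rpow_natCast,
      ← ENNReal.rpow_mul]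
    norm_num

/-- The linear map `(x, y) ↦ (x, ε y)` of `ℝ × ℝ²`, through its determinant and its values on the
standard basis. -/
lemma exists_anisotropic_scaling {ε : ℝ} (hε : ε ≠ 0) :
    ∃ A : EuclideanSpace ℝ (Fin 3) ≃L[ℝ] EuclideanSpace ℝ (Fin 3),
      LinearMap.det (A : EuclideanSpace ℝ (Fin 3) →ₗ[ℝ] EuclideanSpace ℝ (Fin 3)) = ε ^ 2 ∧
      ∀ i, A (EuclideanSpace.single i 1) = (![1, ε, ε] i) • EuclideanSpace.single i 1 := by
  have hdet : LinearMap.det (Matrix.toEuclideanLin (Matrix.diagonal ![1, ε, ε])) = ε ^ 2 := by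
    rw [Matrix.toEuclideanLin, Matrix.toLpLin_eq_toLin, LinearMap.det_toLin, Matrix.det_diagonal]
    simp [Fin.prod_univ_three, sq]
  refine ⟨(LinearMap.equivOfDetNeZero _ (hdet ▸ pow_ne_zero 2 hε)).toContinuousLinearEquiv,
    ?_, fun i => ?_⟩
  · exact hdet
  · change Matrix.toEuclideanLin (Matrix.diagonal ![1, ε, ε]) _ = _
    ext j
    simp [Matrix.toLpLin_apply]

lemma opNorm_sq_le_sum_norm_sq {ι F : Type*} [Fintype ι] [DecidableEq ι] [NormedAddCommGroup F]
    [NormedSpace ℝ F] (L : EuclideanSpace ℝ ι →L[ℝ] F) :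
    ‖L‖ ^ 2 ≤ ∑ i, ‖L (EuclideanSpace.single i 1)‖ ^ 2 := by
  rw [← Real.le_sqrt (by positivity) (by positivity)]
  refine L.opNorm_le_bound (by positivity) fun v => ?_
  have hv : v = ∑ i, v i • EuclideanSpace.single i (1 : ℝ) := by
    simpa using ((EuclideanSpace.basisFun ι ℝ).sum_repr v).symm
  calc ‖L v‖ = ‖∑ i, v i • L (EuclideanSpace.single i 1)‖ := by
        conv_lhs => rw [hv]
        simp only [map_sum, map_smul]
    _ ≤ ∑ i, ‖L (EuclideanSpace.single i 1)‖ * ‖v i‖ := by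
        refine (norm_sum_le _ _).trans_eq ?_
        simp only [norm_smul, mul_comm]
    _ ≤ _ := by
        rw [EuclideanSpace.norm_eq]
        exact Real.sum_mul_le_sqrt_mul_sqrt _ _ _

lemma integral_fderiv_comp_sq_le {f : EuclideanSpace ℝ (Fin 3) → ℂ} (hf : ContDiff ℝ 1 f)
    (hfc : HasCompactSupport f) {ε : ℝ}
    {A : EuclideanSpace ℝ (Fin 3) →L[ℝ] EuclideanSpace ℝ (Fin 3)}
    (hA : ∀ i, A (EuclideanSpace.single i 1) = (![1, ε, ε] i) • EuclideanSpace.single i 1) :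
    MemLp (fun v => (fderiv ℝ f v).comp A) 2 ∧
    ∫ v, ‖(fderiv ℝ f v).comp A‖ ^ 2 ≤
      (∫ u, ‖fderiv ℝ f u (EuclideanSpace.single 0 1)‖ ^ 2) +
        ε ^ 2 * ∫ u, (‖fderiv ℝ f u (EuclideanSpace.single 1 1)‖ ^ 2 +
          ‖fderiv ℝ f u (EuclideanSpace.single 2 1)‖ ^ 2) := by
  have hf' : Continuous (fderiv ℝ f) := hf.continuous_fderiv one_ne_zero
  have hfc' : HasCompactSupport (fderiv ℝ f) := hfc.fderiv ℝ
  have hmem : MemLp (fun v => (fderiv ℝ f v).comp A) 2 :=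
    (hf'.clm_comp continuous_const).memLp_of_hasCompactSupport
      (hfc'.mono fun v hv h => hv (by simp [h]))
  have hInt : ∀ i, Integrable
      fun u => ‖fderiv ℝ f u (EuclideanSpace.single i (1 : ℝ))‖ ^ 2 := fun i =>
    ((hf'.clm_apply continuous_const).norm.pow 2).integrable_of_hasCompactSupport
      (hfc'.mono fun v hv h => hv (by simp [h]))
  have hInt12 : Integrable fun u => ε ^ 2 * (‖fderiv ℝ f u (EuclideanSpace.single 1 (1 : ℝ))‖ ^ 2 +
      ‖fderiv ℝ f u (EuclideanSpace.single 2 (1 : ℝ))‖ ^ 2) :=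
    ((hInt 1).add (hInt 2)).const_mul _
  refine ⟨hmem, ?_⟩
  rw [← integral_const_mul, ← integral_add (hInt 0) hInt12]
  refine integral_mono (hmem.integrable_norm_pow two_ne_zero) ((hInt 0).add hInt12) fun v => ?_
  refine (opNorm_sq_le_sum_norm_sq _).trans_eq ?_
  simp only [ContinuousLinearMap.comp_apply, hA, map_smul, norm_smul, mul_pow, Fin.sum_univ_three]
  simp
  ring

/-- The square of the Sobolev constant of `ℝ³` (exponents `2` and `6`) times the cube root of the
volume of the unit ball. -/
noncomputable def massConst : ℝ :=
  ((SNormLESNormFDerivOfEqConst ℂ (volume : Measure (EuclideanSpace ℝ (Fin 3))) 2 : ℝ) *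
    (volume (Metric.ball (0 : EuclideanSpace ℝ (Fin 3)) 1)).toReal ^ (1 / 3 : ℝ)) ^ 2

lemma setIntegral_closedBall_sq_le {f : EuclideanSpace ℝ (Fin 3) → ℂ} (hf : ContDiff ℝ 1 f)
    (hfc : HasCompactSupport f) {ε : ℝ} (hε : 0 < ε) (a : EuclideanSpace ℝ (Fin 3)) {R : ℝ}
    (hR : 0 ≤ R) :
    ∫ u in Metric.closedBall a R, ‖f u‖ ^ 2 ≤ massConst * R ^ 2 * ε ^ (-(4:ℝ)/3) *
      ((∫ u, ‖fderiv ℝ f u (EuclideanSpace.single 0 1)‖ ^ 2) +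
        ε ^ 2 * ∫ u, (‖fderiv ℝ f u (EuclideanSpace.single 1 1)‖ ^ 2 +
          ‖fderiv ℝ f u (EuclideanSpace.single 2 1)‖ ^ 2)) := by
  obtain ⟨A, hdet, hA⟩ := exists_anisotropic_scaling hε.ne'
  obtain ⟨hGm, hnorm⟩ := integral_fderiv_comp_sq_le hf hfc
    (A := (A : EuclideanSpace ℝ (Fin 3) →L[ℝ] EuclideanSpace ℝ (Fin 3))) hA
  have hE : finrank ℝ (EuclideanSpace ℝ (Fin 3)) = 3 := by simp
  have hfm : MemLp f 2 volume := hf.continuous.memLp_of_hasCompactSupport hfc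
  have hsob := eLpNorm_six_le_eLpNorm_fderiv_comp volume hE hf hfc A
  have hhol := eLpNorm_two_closedBall_le volume hE hf.continuous.aestronglyMeasurable a hR
  rw [hdet] at hsob
  refine le_trans ?_ (mul_le_mul_of_nonneg_left hnorm
    (mul_nonneg (mul_nonneg (sq_nonneg _) (sq_nonneg R)) (Real.rpow_nonneg hε.le _)))
  rw [← eLpNorm_two_toReal_sq (hfm.restrict _), ← eLpNorm_two_toReal_sq hGm, massConst]
  have hGt := hGm.eLpNorm_ne_top
  generalize eLpNorm (fun v => (fderiv ℝ f v).comp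
    (A : EuclideanSpace ℝ (Fin 3) →L[ℝ] EuclideanSpace ℝ (Fin 3))) 2 volume = g at *
  generalize SNormLESNormFDerivOfEqConst ℂ
    (volume : Measure (EuclideanSpace ℝ (Fin 3))) 2 = K at *
  have hv : volume (Metric.ball (0 : EuclideanSpace ℝ (Fin 3)) 1) ≠ ⊤ := measure_ball_lt_top.ne
  generalize volume (Metric.ball (0 : EuclideanSpace ℝ (Fin 3)) 1) = v at *
  have key := hhol.trans (mul_le_mul_left hsob _)
  have hvt : v ^ (1 / 3 : ℝ) ≠ ⊤ := ENNReal.rpow_ne_top_of_nonneg (by norm_num) hv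
  have hct : ENNReal.ofReal |(ε ^ 2)⁻¹| ^ (1 / 3 : ℝ) ≠ ⊤ :=
    ENNReal.rpow_ne_top_of_nonneg (by norm_num) ENNReal.ofReal_ne_top
  have htop := ENNReal.mul_ne_top
    (ENNReal.mul_ne_top (ENNReal.mul_ne_top (ENNReal.coe_ne_top (r := K)) hct) hGt)
    (ENNReal.mul_ne_top (ENNReal.ofReal_ne_top (r := R)) hvt)
  refine (pow_le_pow_left₀ ENNReal.toReal_nonneg (ENNReal.toReal_mono htop key) 2).trans_eq ?_
  have hcε : (|(ε ^ 2)⁻¹| ^ (1 / 3 : ℝ)) ^ 2 = ε ^ (-(4:ℝ)/3) := by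
    rw [abs_of_pos (by positivity), ← Real.rpow_natCast, ← Real.rpow_natCast, ← Real.rpow_neg hε.le,
      ← Real.rpow_mul hε.le, ← Real.rpow_mul hε.le]
    norm_num
  simp only [ENNReal.toReal_mul, ENNReal.toReal_ofReal hR, ← ENNReal.toReal_rpow,
    ENNReal.toReal_ofReal (abs_nonneg _), ENNReal.coe_toReal, ← hcε]
  ring

lemma integral_fin_succ {n : ℕ} {E F : Type*} [MeasureSpace E] [SigmaFinite (volume : Measure E)]
    [NormedAddCommGroup F] [NormedSpace ℝ F] {g : (Fin (n + 1) → E) → F} (hg : Integrable g) :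
    Integrable (fun w : Fin n → E => ∫ u, g (Fin.cons u w)) ∧
      ∫ z, g z = ∫ w : Fin n → E, ∫ u, g (Fin.cons u w) := by
  have hmp := (volume_preserving_piFinSuccAbove (fun _ : Fin (n + 1) => E) 0).symm
  have hcons : ∀ p : E × (Fin n → E),
      (MeasurableEquiv.piFinSuccAbove (fun _ : Fin (n + 1) => E) 0).symm p = Fin.cons p.1 p.2 :=
    fun p => Fin.insertNth_zero' p.1 p.2
  have hInt : Integrable fun p : E × (Fin n → E) => g (Fin.cons p.1 p.2) := by
    have h := (hmp.integrable_comp_emb (MeasurableEquiv.measurableEmbedding _)).2 hg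
    exact h.congr (.of_forall fun p => congrArg g (hcons p))
  refine ⟨hInt.integral_prod_right, ?_⟩
  rw [← hmp.integral_comp (MeasurableEquiv.measurableEmbedding _)]
  simp only [hcons]
  exact integral_prod_symm _ hInt

lemma hasFDerivAt_finCons_left {n : ℕ} {E : Type*} [NormedAddCommGroup E] [NormedSpace ℝ E]
    (w : Fin n → E) (u : E) :
    HasFDerivAt (fun u : E => (Fin.cons u w : Fin (n + 1) → E))
      (ContinuousLinearMap.single ℝ (fun _ => E) 0) u := by
  refine hasFDerivAt_pi'.2 fun i => Fin.cases ?_ (fun j => ?_) i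
  · refine (hasFDerivAt_id u).congr_fderiv ?_
    ext
    simp
  · refine (hasFDerivAt_const (w j) u).congr_fderiv ?_
    ext
    simp

lemma isClosedEmbedding_finCons_left {n : ℕ} {E : Type*} [TopologicalSpace E] [T2Space E]
    (w : Fin n → E) :
    Topology.IsClosedEmbedding (fun u : E => (Fin.cons u w : Fin (n + 1) → E)) :=
  Function.LeftInverse.isClosedEmbedding (f := fun z : Fin (n + 1) → E => z 0) (fun _ => rfl)
    (by fun_prop) (by fun_prop)

/-- There is a universal constant `C` such that for every `N ≥ 2`, `ε ∈ (0,1]`, `R > 0` and every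
smooth compactly supported `ψ` on `(ℝ³)^N`:
`∫ 1_{|z₁-z₂| ≤ R} |ψ|² ≤ C R² ε^(-4/3) (‖∂_{x₁}ψ‖² + ε² ‖∇_{y₁}ψ‖²)`.  Here `z_j = (x_j, y_j)`
with `x_j` the `0`-th coordinate of the `j`-th factor `ℝ³` and `y_j` the coordinates `1, 2`. -/
theorem near_diagonal_mass_bound :
    ∃ C > (0:ℝ), ∀ N : ℕ, ∀ hN : 2 ≤ N, ∀ ε : ℝ, ε ∈ Set.Ioc (0:ℝ) 1 → ∀ R : ℝ, 0 < R →
      ∀ ψ : (Fin N → EuclideanSpace ℝ (Fin 3)) → ℂ, ContDiff ℝ (⊤ : ℕ∞) ψ → HasCompactSupport ψ →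
        (∫ z in {z : Fin N → EuclideanSpace ℝ (Fin 3) |
            ‖z ⟨0, by omega⟩ - z ⟨1, by omega⟩‖ ≤ R}, ‖ψ z‖ ^ 2) ≤
          C * R ^ 2 * ε ^ (-(4:ℝ)/3) *
            ((∫ z : Fin N → EuclideanSpace ℝ (Fin 3),
                ‖fderiv ℝ ψ z (Pi.single (⟨0, by omega⟩ : Fin N)
                  (EuclideanSpace.single (0 : Fin 3) (1:ℝ)))‖ ^ 2) +
              ε ^ 2 * ∫ z : Fin N → EuclideanSpace ℝ (Fin 3),
                (‖fderiv ℝ ψ z (Pi.single (⟨0, by omega⟩ : Fin N)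
                    (EuclideanSpace.single (1 : Fin 3) (1:ℝ)))‖ ^ 2 +
                  ‖fderiv ℝ ψ z (Pi.single (⟨0, by omega⟩ : Fin N)
                    (EuclideanSpace.single (2 : Fin 3) (1:ℝ)))‖ ^ 2)) := by
  have hM : 0 ≤ massConst := sq_nonneg _
  refine ⟨massConst + 1, by linarith, fun N hN ε hε R hR ψ hψ hψc => ?_⟩
  obtain ⟨n, rfl⟩ : ∃ n, N = n + 1 + 1 := ⟨N - 2, by omega⟩
  change (∫ z in {z : Fin (n + 1 + 1) → EuclideanSpace ℝ (Fin 3) | ‖z 0 - z 1‖ ≤ R}, ‖ψ z‖ ^ 2) ≤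
    (massConst + 1) * R ^ 2 * ε ^ (-(4:ℝ)/3) *
      ((∫ z, ‖fderiv ℝ ψ z (Pi.single 0 (EuclideanSpace.single 0 1))‖ ^ 2) +
        ε ^ 2 * ∫ z, (‖fderiv ℝ ψ z (Pi.single 0 (EuclideanSpace.single 1 1))‖ ^ 2 +
          ‖fderiv ℝ ψ z (Pi.single 0 (EuclideanSpace.single 2 1))‖ ^ 2))
  have hε0 : 0 < ε := hε.1
  have hψ1 : ContDiff ℝ 1 ψ := hψ.of_le (by exact_mod_cast le_top)
  have hψ' : Continuous (fderiv ℝ ψ) := hψ1.continuous_fderiv one_ne_zero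
  have hψc' : HasCompactSupport (fderiv ℝ ψ) := hψc.fderiv ℝ
  have hInt : ∀ e, Integrable fun z => ‖fderiv ℝ ψ z e‖ ^ 2 := fun e =>
    ((hψ'.clm_apply continuous_const).norm.pow 2).integrable_of_hasCompactSupport
      (hψc'.mono fun v hv h => hv (by simp [h]))
  have hInt0 : Integrable fun z => ‖ψ z‖ ^ 2 :=
    (hψ1.continuous.norm.pow 2).integrable_of_hasCompactSupport
      (hψc.mono fun v hv h => hv (by simp [h]))
  have hS : MeasurableSet {z : Fin (n + 1 + 1) → EuclideanSpace ℝ (Fin 3) | ‖z 0 - z 1‖ ≤ R} :=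
    (isClosed_le (by fun_prop) continuous_const).measurableSet
  rw [← integral_indicator hS]
  obtain ⟨hi1, he1⟩ := integral_fin_succ (hInt0.indicator hS)
  obtain ⟨hi2, he2⟩ := integral_fin_succ (hInt (Pi.single 0 (EuclideanSpace.single 0 1)))
  obtain ⟨hi3, he3⟩ := integral_fin_succ ((hInt (Pi.single 0 (EuclideanSpace.single 1 1))).add
    (hInt (Pi.single 0 (EuclideanSpace.single 2 1))))
  simp only [Pi.add_apply] at hi3 he3
  rw [he1, he2, he3, ← integral_const_mul, ← integral_add hi2 (hi3.const_mul _),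
    ← integral_const_mul]
  refine integral_mono hi1 ((hi2.add (hi3.const_mul _)).const_mul _) fun w => ?_
  have hfd : ∀ u e, fderiv ℝ (fun u => ψ (Fin.cons u w)) u e =
      fderiv ℝ ψ (Fin.cons u w) (Pi.single 0 e) := fun u e => by
    have h := ((hψ1.differentiable one_ne_zero _).hasFDerivAt.comp u
      (hasFDerivAt_finCons_left w u)).fderiv
    exact congrArg (fun L => L e) h
  have hsm : ContDiff ℝ 1 fun u => ψ (Fin.cons u w) := by
    refine hψ1.comp (contDiff_pi.2 fun i => Fin.cases ?_ (fun j => ?_) i)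
    · exact contDiff_id
    · exact contDiff_const
  have hcs : HasCompactSupport fun u => ψ (Fin.cons u w) :=
    hψc.comp_isClosedEmbedding (isClosedEmbedding_finCons_left w)
  have key := setIntegral_closedBall_sq_le hsm hcs hε0 (w 0) hR.le
  rw [← integral_indicator Metric.isClosed_closedBall.measurableSet] at key
  simp only [hfd] at key
  have hind : ∀ u, Set.indicator
      {z : Fin (n + 1 + 1) → EuclideanSpace ℝ (Fin 3) | ‖z 0 - z 1‖ ≤ R}
      (fun z => ‖ψ z‖ ^ 2) (Fin.cons u w) =
      (Metric.closedBall (w 0) R).indicator (fun u => ‖ψ (Fin.cons u w)‖ ^ 2) u := by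
    classical
    intro u
    have h1 : (Fin.cons u w : Fin (n + 1 + 1) → EuclideanSpace ℝ (Fin 3)) 1 = w 0 := rfl
    simp only [Set.indicator_apply, Set.mem_ofPred_eq, Fin.cons_zero, h1,
      mem_closedBall_iff_norm]
  simp only [hind]
  refine key.trans ?_
  gcongr
  linarith
end

section
/- Let N ≥ 2 be an integer, ε ∈ (0,1], μ := ε²/N, d > 1/3, and define Ā₁ := {(z₁,…,z_N) ∈ (ℝ³)^N : |z₁ − z_k| < μ^d for some k ∈ {2,…,N}}. There is a universal constant C such that for every ψ ∈ C_c^∞((ℝ³)^N; ℂ): ‖1_{Ā₁} ψ‖ ≤ C μ^{d − 1/3} ( ‖∂_{x₁} ψ‖ + ε ‖∇_{y₁} ψ‖ ). -/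
open MeasureTheory
open scoped ENNReal NNReal

/-- Change of variables for the lower Lebesgue integral under an invertible linear map. -/
theorem lintegral_comp_linearMap {E : Type*} [NormedAddCommGroup E] [NormedSpace ℝ E]
    [FiniteDimensional ℝ E] [MeasurableSpace E] [BorelSpace E] (μ : Measure E)
    [μ.IsAddHaarMeasure] {L : E →ₗ[ℝ] E} (hL : LinearMap.det L ≠ 0) {f : E → ℝ≥0∞}
    (hf : Measurable f) :
    ∫⁻ x, f (L x) ∂μ = ENNReal.ofReal |(LinearMap.det L)⁻¹| * ∫⁻ x, f x ∂μ := by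
  rw [← lintegral_map hf L.continuous_of_finiteDimensional.measurable,
    Measure.map_linearMap_addHaar_eq_smul_addHaar μ hL, lintegral_smul_measure, smul_eq_mul]

/-- The operator norm on `ℝⁿ` is controlled by the values on the standard basis. -/
theorem norm_sq_le_card_mul_sum_norm_sq {n : ℕ} {F : Type*} [NormedAddCommGroup F]
    [NormedSpace ℝ F] (A : EuclideanSpace ℝ (Fin n) →L[ℝ] F) :
    ‖A‖ ^ 2 ≤ n * ∑ i, ‖A (EuclideanSpace.single i 1)‖ ^ 2 := by
  have hA : ‖A‖ ≤ ∑ i, ‖A (EuclideanSpace.single i 1)‖ := by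
    refine A.opNorm_le_bound (by positivity) fun v => ?_
    have hv : v = ∑ i, v i • EuclideanSpace.single i (1 : ℝ) := by
      simpa using ((EuclideanSpace.basisFun (Fin n) ℝ).sum_repr v).symm
    calc ‖A v‖ = ‖∑ i, v i • A (EuclideanSpace.single i 1)‖ := by
          conv_lhs => rw [hv]
          simp only [map_sum, map_smul]
      _ ≤ ∑ i, ‖v‖ * ‖A (EuclideanSpace.single i 1)‖ := by
          refine norm_sum_le_of_le _ fun i _ => ?_
          rw [norm_smul]
          gcongr
          exact PiLp.norm_apply_le v i
      _ = _ := by rw [← Finset.mul_sum, mul_comm]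
  calc ‖A‖ ^ 2 ≤ (∑ i, ‖A (EuclideanSpace.single i 1)‖) ^ 2 := by gcongr
    _ ≤ _ := by
        simpa using sq_sum_le_card_mul_sum_sq (s := Finset.univ)
          (f := fun i => ‖A (EuclideanSpace.single i 1)‖)

/-- The anisotropic energy density of a function on `ℝ³` at a point with differential `A`. -/
noncomputable def anisotropicEnergy (ε : ℝ) (A : EuclideanSpace ℝ (Fin 3) →L[ℝ] ℂ) : ℝ :=
  ‖A (EuclideanSpace.single 0 1)‖ ^ 2 + ε ^ 2 * (‖A (EuclideanSpace.single 1 1)‖ ^ 2 +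
    ‖A (EuclideanSpace.single 2 1)‖ ^ 2)

theorem continuous_anisotropicEnergy (ε : ℝ) : Continuous (anisotropicEnergy ε) := by
  unfold anisotropicEnergy
  fun_prop

/-- The constant in the squared Sobolev inequality `‖u‖²_{L⁶} ≤ K ‖∇u‖²_{L²}` on `ℝ³`. -/
noncomputable def sobolevSqConst : ℝ≥0 :=
  eLpNormLESNormFDerivOfEqInnerConst (volume : Measure (EuclideanSpace ℝ (Fin 3))) 2 ^ 2

/-- The Sobolev inequality `‖u‖²_{L⁶} ≤ K ‖∇u‖²_{L²}` on `ℝ³`. -/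
theorem lintegral_enorm_pow_six_le {u : EuclideanSpace ℝ (Fin 3) → ℂ} (hu : ContDiff ℝ 1 u)
    (hcu : HasCompactSupport u) :
    (∫⁻ x, ‖u x‖ₑ ^ (6 : ℝ)) ^ (1 / 3 : ℝ) ≤
      sobolevSqConst * ∫⁻ x, ENNReal.ofReal (‖fderiv ℝ u x‖ ^ 2) := by
  have h := eLpNorm_le_eLpNorm_fderiv_of_eq_inner (volume : Measure (EuclideanSpace ℝ (Fin 3)))
    hu hcu (p := 2) (p' := 6) (by norm_num) (by simp) (by simp; norm_num)
  rw [eLpNorm_nnreal_eq_lintegral (by norm_num), eLpNorm_nnreal_eq_lintegral (by norm_num)] at h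
  have h2 := pow_le_pow_left' h 2
  rw [mul_pow, ← ENNReal.rpow_natCast, ← ENNReal.rpow_natCast (_ ^ _) 2, ← ENNReal.rpow_mul,
    ← ENNReal.rpow_mul] at h2
  norm_num at h2
  simpa [sobolevSqConst, ENNReal.ofReal_pow] using h2

/-- The Sobolev inequality on `ℝ³` rescaled by `ε` in the last two variables. -/
theorem anisotropic_sobolev {ε : ℝ} (hε : 0 < ε) {u : EuclideanSpace ℝ (Fin 3) → ℂ}
    (hu : ContDiff ℝ 1 u) (hcu : HasCompactSupport u) :
    (∫⁻ x, ‖u x‖ₑ ^ (6 : ℝ)) ^ (1 / 3 : ℝ) ≤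
      sobolevSqConst * 3 * ENNReal.ofReal (ε ^ (-4 / 3 : ℝ)) *
        ∫⁻ x, ENNReal.ofReal (anisotropicEnergy ε (fderiv ℝ u x)) := by
  let L : EuclideanSpace ℝ (Fin 3) →ₗ[ℝ] EuclideanSpace ℝ (Fin 3) :=
    Matrix.toLpLin 2 2 (Matrix.diagonal ![1, ε, ε])
  have hdet : LinearMap.det L = ε ^ 2 := by
    simp [L, LinearMap.det_toLpLin, Matrix.det_diagonal, Fin.prod_univ_three, sq]
  have hdet0 : LinearMap.det L ≠ 0 := by rw [hdet]; positivity
  let Le := (LinearEquiv.ofIsUnitDet (f := L) (v := PiLp.basisFun 2 ℝ (Fin 3))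
    (v' := PiLp.basisFun 2 ℝ (Fin 3))
    (by rw [LinearMap.det_toMatrix]; exact hdet0.isUnit)).toContinuousLinearEquiv
  have hLe : ∀ x, Le x = L x := fun x => rfl
  have hLs : ∀ i, L (EuclideanSpace.single i 1) =
      (![1, ε, ε] i) • EuclideanSpace.single i (1 : ℝ) := by
    intro i
    ext j
    simp only [L, Matrix.ofLp_toLpLin, PiLp.ofLp_single, Matrix.toLin'_apply]
    fin_cases i <;> fin_cases j <;> simp [Matrix.mulVec_diagonal]
  have hdu := hu.differentiable one_ne_zero
  have hfd : ∀ x, ‖fderiv ℝ (u ∘ Le) x‖ ^ 2 ≤ 3 * anisotropicEnergy ε (fderiv ℝ u (L x)) := by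
    intro x
    refine (norm_sq_le_card_mul_sum_norm_sq _).trans_eq ?_
    rw [fderiv_comp x (hdu _) Le.differentiableAt, Le.fderiv]
    simp [Fin.sum_univ_three, hLe, hLs, anisotropicEnergy, mul_pow]
    ring
  have hS := lintegral_enorm_pow_six_le (hu.comp Le.contDiff)
    (hcu.comp_isClosedEmbedding Le.toHomeomorph.isClosedEmbedding)
  have hc : ENNReal.ofReal |(LinearMap.det L)⁻¹| = ENNReal.ofReal (ε ^ (-2 : ℝ)) := by
    rw [hdet, abs_of_nonneg (by positivity), Real.rpow_neg hε.le]
    norm_num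
  have hm : Continuous fun x => anisotropicEnergy ε (fderiv ℝ u x) :=
    (continuous_anisotropicEnergy ε).comp (hu.continuous_fderiv one_ne_zero)
  have hl : ∫⁻ x, ‖(u ∘ Le) x‖ₑ ^ (6 : ℝ) =
      ENNReal.ofReal (ε ^ (-2 : ℝ)) * ∫⁻ x, ‖u x‖ₑ ^ (6 : ℝ) := by
    rw [← hc]
    exact lintegral_comp_linearMap volume hdet0 (hu.continuous.measurable.enorm.pow_const _)
  have hr : ∫⁻ x, ENNReal.ofReal (‖fderiv ℝ (u ∘ Le) x‖ ^ 2) ≤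
      3 * (ENNReal.ofReal (ε ^ (-2 : ℝ)) *
        ∫⁻ x, ENNReal.ofReal (anisotropicEnergy ε (fderiv ℝ u x))) := by
    rw [← hc, ← lintegral_comp_linearMap volume hdet0 hm.measurable.ennreal_ofReal,
      ← lintegral_const_mul' _ _ (by simp)]
    refine lintegral_mono fun x => ?_
    refine (ENNReal.ofReal_le_ofReal (hfd x)).trans_eq ?_
    rw [ENNReal.ofReal_mul (by norm_num)]
    simp
  rw [hl, ENNReal.mul_rpow_of_nonneg _ _ (by norm_num),
    ENNReal.ofReal_rpow_of_pos (by positivity), ← Real.rpow_mul hε.le] at hS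
  have hcancel : ENNReal.ofReal (ε ^ (2 / 3 : ℝ)) * ENNReal.ofReal (ε ^ (-2 * (1 / 3) : ℝ)) = 1 := by
    rw [← ENNReal.ofReal_mul (by positivity), ← Real.rpow_add hε]
    norm_num
  calc (∫⁻ x, ‖u x‖ₑ ^ (6 : ℝ)) ^ (1 / 3 : ℝ)
      = ENNReal.ofReal (ε ^ (2 / 3 : ℝ)) * (ENNReal.ofReal (ε ^ (-2 * (1 / 3) : ℝ)) *
          (∫⁻ x, ‖u x‖ₑ ^ (6 : ℝ)) ^ (1 / 3 : ℝ)) := by rw [← mul_assoc, hcancel, one_mul]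
    _ ≤ ENNReal.ofReal (ε ^ (2 / 3 : ℝ)) * (sobolevSqConst * (3 * (ENNReal.ofReal (ε ^ (-2 : ℝ)) *
        ∫⁻ x, ENNReal.ofReal (anisotropicEnergy ε (fderiv ℝ u x))))) :=
        mul_le_mul_right (hS.trans (mul_le_mul_right hr _)) _
    _ = sobolevSqConst * 3 * (ENNReal.ofReal (ε ^ (2 / 3 : ℝ)) * ENNReal.ofReal (ε ^ (-2 : ℝ))) *
        ∫⁻ x, ENNReal.ofReal (anisotropicEnergy ε (fderiv ℝ u x)) := by ring
    _ = _ := by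
        rw [← ENNReal.ofReal_mul (by positivity), ← Real.rpow_add hε]
        norm_num

/-- Hölder's inequality on a set: `∫_B |u|² ≤ (∫ |u|⁶)^{1/3} |B|^{2/3}`. -/
theorem setLIntegral_enorm_sq_le {α F : Type*} [MeasurableSpace α] [NormedAddCommGroup F]
    {μ : Measure α} {u : α → F} (hu : AEStronglyMeasurable u μ) (B : Set α) :
    ∫⁻ x in B, ‖u x‖ₑ ^ 2 ∂μ ≤
      (∫⁻ x, ‖u x‖ₑ ^ (6 : ℝ) ∂μ) ^ (1 / 3 : ℝ) * μ B ^ (2 / 3 : ℝ) := by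
  have hpq : (3 : ℝ).HolderConjugate (3 / 2) := by
    rw [Real.holderConjugate_iff]; norm_num
  have h := ENNReal.lintegral_mul_le_Lp_mul_Lq (μ.restrict B) hpq
    (f := fun x => ‖u x‖ₑ ^ 2) (g := fun _ => 1) (hu.restrict.enorm.pow_const 2) (by fun_prop)
  simp only [Pi.mul_apply, mul_one, ENNReal.one_rpow, lintegral_one, Measure.restrict_apply_univ,
    ← ENNReal.rpow_natCast, ← ENNReal.rpow_mul] at h ⊢
  norm_num at h ⊢
  refine h.trans ?_
  gcongr
  exact Measure.restrict_le_self

/-- The volume of a union of `n` balls of radius `r` in `ℝ³`. -/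
theorem volume_iUnion_ball_le {n : ℕ} (w : Fin n → EuclideanSpace ℝ (Fin 3)) {r : ℝ}
    (hr : 0 < r) :
    volume (⋃ k, Metric.ball (w k) r) ≤
      ENNReal.ofReal (n * r ^ 3) * volume (Metric.ball (0 : EuclideanSpace ℝ (Fin 3)) 1) := by
  refine (measure_iUnion_le _).trans_eq ?_
  rw [tsum_fintype, Finset.sum_congr rfl fun k _ => Measure.addHaar_ball volume (w k) hr.le]
  simp [ENNReal.ofReal_mul, mul_assoc]

theorem setLIntegral_iUnion_ball_enorm_sq_le {n : ℕ} {ε r : ℝ} (hε : 0 < ε) (hr : 0 < r)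
    {u : EuclideanSpace ℝ (Fin 3) → ℂ} (hu : ContDiff ℝ 1 u) (hcu : HasCompactSupport u)
    (w : Fin n → EuclideanSpace ℝ (Fin 3)) :
    ∫⁻ x in ⋃ k, Metric.ball (w k) r, ‖u x‖ₑ ^ 2 ≤
      sobolevSqConst * 3 * volume (Metric.ball (0 : EuclideanSpace ℝ (Fin 3)) 1) ^ (2 / 3 : ℝ) *
        ENNReal.ofReal (ε ^ (-4 / 3 : ℝ) * (n * r ^ 3) ^ (2 / 3 : ℝ)) *
        ∫⁻ x, ENNReal.ofReal (anisotropicEnergy ε (fderiv ℝ u x)) := by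
  calc _ ≤ _ := setLIntegral_enorm_sq_le hu.continuous.aestronglyMeasurable _
    _ ≤ (sobolevSqConst * 3 * ENNReal.ofReal (ε ^ (-4 / 3 : ℝ)) *
        ∫⁻ x, ENNReal.ofReal (anisotropicEnergy ε (fderiv ℝ u x))) *
        (ENNReal.ofReal (n * r ^ 3) *
          volume (Metric.ball (0 : EuclideanSpace ℝ (Fin 3)) 1)) ^ (2 / 3 : ℝ) :=
        mul_le_mul' (anisotropic_sobolev hε hu hcu)
          (ENNReal.rpow_le_rpow (volume_iUnion_ball_le w hr) (by norm_num))
    _ = _ := by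
        rw [ENNReal.mul_rpow_of_nonneg _ _ (by norm_num),
          ENNReal.ofReal_rpow_of_nonneg (by positivity) (by norm_num),
          ENNReal.ofReal_mul (by positivity)]
        ring

/-- Tonelli's theorem, splitting off the first coordinate. -/
theorem lintegral_fin_cons {E : Type*} [MeasureSpace E] [SigmaFinite (volume : Measure E)]
    {n : ℕ} {f : (Fin (n + 1) → E) → ℝ≥0∞} (hf : Measurable f) :
    ∫⁻ z, f z = ∫⁻ w : Fin n → E, ∫⁻ x, f (Fin.cons x w) := by
  have h := volume_preserving_piFinSuccAbove (fun _ : Fin (n + 1) => E) 0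
  rw [← h.symm.lintegral_comp hf, Measure.volume_eq_prod,
    lintegral_prod_symm' _ (by fun_prop)]
  simp [MeasurableEquiv.piFinSuccAbove, Fin.consEquiv]

/-- Fixing all but the first coordinate gives a closed embedding of `E` into `Eⁿ⁺¹`. -/
theorem isClosedEmbedding_fin_cons {E : Type*} [TopologicalSpace E] [T2Space E] {n : ℕ}
    (w : Fin n → E) : Topology.IsClosedEmbedding fun x : E => (Fin.cons x w : Fin (n + 1) → E) :=
  Function.LeftInverse.isClosedEmbedding (f := fun z => z 0) (fun _ => rfl)
    (continuous_apply 0) (by fun_prop)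

theorem hasFDerivAt_fin_cons {E : Type*} [NormedAddCommGroup E] [NormedSpace ℝ E] {n : ℕ}
    (w : Fin n → E) (x : E) :
    HasFDerivAt (fun x : E => (Fin.cons x w : Fin (n + 1) → E))
      (ContinuousLinearMap.single ℝ (fun _ : Fin (n + 1) => E) 0) x := by
  rw [hasFDerivAt_pi']
  intro i
  refine Fin.cases ?_ (fun j => ?_) i
  · exact (hasFDerivAt_id x).congr_fderiv (by ext; simp)
  · exact (hasFDerivAt_const (w j) x).congr_fderiv (by ext; simp)

/-- The inclusion of the first factor into `(ℝ³)ⁿ⁺¹`. -/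
noncomputable abbrev firstInclusion (n : ℕ) :
    EuclideanSpace ℝ (Fin 3) →L[ℝ] Fin (n + 1) → EuclideanSpace ℝ (Fin 3) :=
  ContinuousLinearMap.single ℝ (fun _ => EuclideanSpace ℝ (Fin 3)) 0

theorem setLIntegral_interaction_le {n : ℕ} {ε r : ℝ} (hε : 0 < ε) (hr : 0 < r)
    {ψ : (Fin (n + 1) → EuclideanSpace ℝ (Fin 3)) → ℂ} (hψ : ContDiff ℝ 1 ψ)
    (hcψ : HasCompactSupport ψ) :
    ∫⁻ z in {z | ∃ k, k ≠ 0 ∧ ‖z 0 - z k‖ < r}, ‖ψ z‖ₑ ^ 2 ≤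
      sobolevSqConst * 3 * volume (Metric.ball (0 : EuclideanSpace ℝ (Fin 3)) 1) ^ (2 / 3 : ℝ) *
        ENNReal.ofReal (ε ^ (-4 / 3 : ℝ) * (n * r ^ 3) ^ (2 / 3 : ℝ)) *
        ∫⁻ z, ENNReal.ofReal (anisotropicEnergy ε
          ((fderiv ℝ ψ z).comp (firstInclusion n))) := by
  set A : Set (Fin (n + 1) → EuclideanSpace ℝ (Fin 3)) := {z | ∃ k, k ≠ 0 ∧ ‖z 0 - z k‖ < r}
    with hA
  have hAo : IsOpen A := by
    simp only [hA, Set.ofPred_exists]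
    refine isOpen_iUnion fun k => isOpen_const.and (isOpen_lt (by fun_prop) continuous_const)
  have hcf : Continuous (fderiv ℝ ψ) := hψ.continuous_fderiv one_ne_zero
  have hm : Continuous fun z => anisotropicEnergy ε
      ((fderiv ℝ ψ z).comp (firstInclusion n)) :=
    (continuous_anisotropicEnergy ε).comp (hcf.clm_comp continuous_const)
  rw [← lintegral_indicator hAo.measurableSet,
    lintegral_fin_cons ((hψ.continuous.measurable.enorm.pow_const 2).indicator hAo.measurableSet),
    lintegral_fin_cons hm.measurable.ennreal_ofReal,
    ← lintegral_const_mul' _ _ (by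
      have : volume (Metric.ball (0 : EuclideanSpace ℝ (Fin 3)) 1) ≠ ⊤ := measure_ball_lt_top.ne
      finiteness)]
  refine lintegral_mono fun w => ?_
  have hu : ContDiff ℝ 1 fun x : EuclideanSpace ℝ (Fin 3) => ψ (Fin.cons x w) :=
    hψ.comp (contDiff_pi.2 (Fin.cases contDiff_id fun j => contDiff_const))
  have hfd : ∀ x, fderiv ℝ (fun x : EuclideanSpace ℝ (Fin 3) => ψ (Fin.cons x w)) x =
      (fderiv ℝ ψ (Fin.cons x w)).comp (firstInclusion n) := fun x =>
    ((hψ.differentiable one_ne_zero _).hasFDerivAt.comp x (hasFDerivAt_fin_cons w x)).fderiv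
  have h := setLIntegral_iUnion_ball_enorm_sq_le hε hr hu
    (hcψ.comp_isClosedEmbedding (isClosedEmbedding_fin_cons w)) w
  simp only [hfd] at h
  refine le_trans (le_of_eq ?_) h
  rw [← lintegral_indicator (MeasurableSet.iUnion fun k => measurableSet_ball)]
  refine lintegral_congr fun x => ?_
  have hmem : (Fin.cons x w : Fin (n + 1) → EuclideanSpace ℝ (Fin 3)) ∈ A ↔
      x ∈ ⋃ k, Metric.ball (w k) r := by
    simp [hA, Fin.exists_fin_succ, dist_eq_norm]
  by_cases hx : x ∈ ⋃ k, Metric.ball (w k) r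
  · rw [Set.indicator_of_mem (hmem.2 hx), Set.indicator_of_mem hx]
  · rw [Set.indicator_of_notMem (mt hmem.1 hx), Set.indicator_of_notMem hx]

theorem rpow_scaling {ε d : ℝ} (hε : 0 < ε) {n : ℕ} :
    ε ^ (-4 / 3 : ℝ) * (n * ((ε ^ 2 / (n + 1 : ℕ)) ^ d) ^ 3) ^ (2 / 3 : ℝ) ≤
      ((ε ^ 2 / (n + 1 : ℕ)) ^ (d - 1 / 3)) ^ 2 := by
  set m : ℝ := ((n + 1 : ℕ) : ℝ) with hm
  have hm0 : 0 < m := by positivity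
  set μ : ℝ := ε ^ 2 / m with hμ
  have hμ0 : 0 < μ := by positivity
  have hnm : (n : ℝ) ≤ m := by simp [hm]
  have hεμ : ε ^ (-4 / 3 : ℝ) * m ^ (2 / 3 : ℝ) = μ ^ (-2 / 3 : ℝ) := by
    rw [hμ, Real.div_rpow (by positivity) hm0.le, ← Real.rpow_natCast, ← Real.rpow_mul hε.le,
      div_eq_mul_inv _ (m ^ _), ← Real.rpow_neg hm0.le]
    norm_num
  calc ε ^ (-4 / 3 : ℝ) * (n * (μ ^ d) ^ 3) ^ (2 / 3 : ℝ)
      ≤ ε ^ (-4 / 3 : ℝ) * (m * (μ ^ d) ^ 3) ^ (2 / 3 : ℝ) := by gcongr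
    _ = μ ^ (-2 / 3 : ℝ) * ((μ ^ d) ^ 3) ^ (2 / 3 : ℝ) := by
        rw [Real.mul_rpow hm0.le (by positivity), ← mul_assoc, hεμ]
    _ = (μ ^ (d - 1 / 3)) ^ 2 := by
        rw [← Real.rpow_natCast, ← Real.rpow_natCast, ← Real.rpow_mul hμ0.le,
          ← Real.rpow_mul hμ0.le, ← Real.rpow_mul hμ0.le, ← Real.rpow_add hμ0]
        congr 1
        push_cast
        ring

/-- The universal constant, squared, in `interaction_neighbourhood_bound`. -/
noncomputable def interactionSqConst : ℝ :=
  sobolevSqConst * 3 * volume.real (Metric.ball (0 : EuclideanSpace ℝ (Fin 3)) 1) ^ (2 / 3 : ℝ)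

theorem HasCompactSupport.comp_fderiv {E F : Type*} [NormedAddCommGroup E] [NormedSpace ℝ E]
    [NormedAddCommGroup F] [NormedSpace ℝ F] {ψ : E → F} (hψ : HasCompactSupport ψ)
    {G : (E →L[ℝ] F) → ℝ} (hG : G 0 = 0) : HasCompactSupport fun z => G (fderiv ℝ ψ z) :=
  (hψ.fderiv ℝ).comp_left hG

theorem setIntegral_interaction_le {n : ℕ} {ε d : ℝ} (hε : 0 < ε)
    {ψ : (Fin (n + 1) → EuclideanSpace ℝ (Fin 3)) → ℂ} (hψ : ContDiff ℝ 1 ψ)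
    (hcψ : HasCompactSupport ψ) :
    ∫ z in {z | ∃ k, k ≠ 0 ∧ ‖z 0 - z k‖ < (ε ^ 2 / (n + 1 : ℕ)) ^ d}, ‖ψ z‖ ^ 2 ≤
      interactionSqConst * ((ε ^ 2 / (n + 1 : ℕ)) ^ (d - 1 / 3)) ^ 2 *
        ∫ z, anisotropicEnergy ε ((fderiv ℝ ψ z).comp (firstInclusion n)) := by
  have hr : 0 < (ε ^ 2 / (n + 1 : ℕ)) ^ d := by positivity
  have h := setLIntegral_interaction_le hε hr hψ hcψ
  have hcf : Continuous (fderiv ℝ ψ) := hψ.continuous_fderiv one_ne_zero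
  have hm : Continuous fun z => anisotropicEnergy ε
      ((fderiv ℝ ψ z).comp (firstInclusion n)) :=
    (continuous_anisotropicEnergy ε).comp (hcf.clm_comp continuous_const)
  have hsupp : HasCompactSupport fun z => anisotropicEnergy ε
      ((fderiv ℝ ψ z).comp (firstInclusion n)) :=
    hcψ.comp_fderiv (G := fun B => anisotropicEnergy ε (B.comp (firstInclusion n)))
      (by simp [anisotropicEnergy])
  have hnn : ∀ B, 0 ≤ anisotropicEnergy ε B := fun B => by
    unfold anisotropicEnergy
    positivity
  have hE0 : 0 ≤ ∫ z, anisotropicEnergy ε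
      ((fderiv ℝ ψ z).comp (firstInclusion n)) :=
    integral_nonneg fun z => hnn _
  have hK0 : 0 ≤ interactionSqConst := by
    unfold interactionSqConst
    positivity
  have hK : (sobolevSqConst * 3 *
      volume (Metric.ball (0 : EuclideanSpace ℝ (Fin 3)) 1) ^ (2 / 3 : ℝ) : ℝ≥0∞) =
      ENNReal.ofReal interactionSqConst := by
    rw [interactionSqConst, ENNReal.ofReal_mul (by positivity), ENNReal.ofReal_mul (by positivity),
      ← ENNReal.ofReal_rpow_of_nonneg (by positivity) (by norm_num), Measure.real,
      ENNReal.ofReal_toReal measure_ball_lt_top.ne]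
    simp
  rw [← ofReal_integral_eq_lintegral_ofReal (hm.integrable_of_hasCompactSupport hsupp)
    (.of_forall fun z => hnn _), hK, ← ENNReal.ofReal_mul hK0,
    ← ENNReal.ofReal_mul (by positivity)] at h
  have hn : Continuous fun z => ‖ψ z‖ ^ 2 := hψ.continuous.norm.pow 2
  rw [integral_eq_lintegral_of_nonneg_ae (.of_forall fun z => by positivity)
    hn.aestronglyMeasurable]
  simp only [ENNReal.ofReal_pow (norm_nonneg _), ofReal_norm]
  refine (ENNReal.toReal_mono ENNReal.ofReal_ne_top h).trans ?_
  rw [ENNReal.toReal_ofReal (by positivity)]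
  gcongr
  exact rpow_scaling hε

/-- There is a universal constant `C` such that for every `N ≥ 2`, `ε ∈ (0,1]`, `μ := ε²/N`,
`d > 1/3`, and every smooth compactly supported `ψ` on `(ℝ³)^N`, with
`Ā₁ := {z : |z₁ - z_k| < μ^d for some k ≠ 1}`:
`‖1_{Ā₁} ψ‖ ≤ C μ^(d - 1/3) (‖∂_{x₁}ψ‖ + ε ‖∇_{y₁}ψ‖)`. -/
theorem interaction_neighbourhood_bound :
    ∃ C > (0:ℝ), ∀ N : ℕ, ∀ hN : 2 ≤ N, ∀ ε : ℝ, ε ∈ Set.Ioc (0:ℝ) 1 →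
      ∀ d : ℝ, 1/3 < d →
      ∀ ψ : (Fin N → EuclideanSpace ℝ (Fin 3)) → ℂ, ContDiff ℝ (⊤ : ℕ∞) ψ → HasCompactSupport ψ →
        Real.sqrt (∫ z in {z : Fin N → EuclideanSpace ℝ (Fin 3) |
            ∃ k : Fin N, k ≠ ⟨0, by omega⟩ ∧
              ‖z ⟨0, by omega⟩ - z k‖ < (ε ^ 2 / N) ^ d}, ‖ψ z‖ ^ 2) ≤
          C * (ε ^ 2 / N) ^ (d - 1/3) *
            (Real.sqrt (∫ z : Fin N → EuclideanSpace ℝ (Fin 3),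
                ‖fderiv ℝ ψ z (Pi.single (⟨0, by omega⟩ : Fin N)
                  (EuclideanSpace.single (0 : Fin 3) (1:ℝ)))‖ ^ 2) +
              ε * Real.sqrt (∫ z : Fin N → EuclideanSpace ℝ (Fin 3),
                (‖fderiv ℝ ψ z (Pi.single (⟨0, by omega⟩ : Fin N)
                    (EuclideanSpace.single (1 : Fin 3) (1:ℝ)))‖ ^ 2 +
                  ‖fderiv ℝ ψ z (Pi.single (⟨0, by omega⟩ : Fin N)
                    (EuclideanSpace.single (2 : Fin 3) (1:ℝ)))‖ ^ 2))) := by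
  have hK0 : 0 ≤ interactionSqConst := by
    unfold interactionSqConst
    positivity
  refine ⟨Real.sqrt interactionSqConst + 1, by positivity, ?_⟩
  intro N hN ε hε d _ ψ hψ hcψ
  obtain ⟨n, rfl⟩ : ∃ n, N = n + 1 := ⟨N - 1, by omega⟩
  have hε0 : 0 < ε := hε.1
  have hψ1 : ContDiff ℝ 1 ψ := hψ.of_le (by exact_mod_cast le_top)
  have hcf : Continuous (fderiv ℝ ψ) := hψ1.continuous_fderiv one_ne_zero
  have hint : ∀ v, Integrable fun z => ‖fderiv ℝ ψ z v‖ ^ 2 := fun v =>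
    Continuous.integrable_of_hasCompactSupport (by fun_prop)
      (hcψ.comp_fderiv (G := fun B => ‖B v‖ ^ 2) (by simp))
  have h := setIntegral_interaction_le (d := d) hε0 hψ1 hcψ
  have hE : ∫ z, anisotropicEnergy ε ((fderiv ℝ ψ z).comp (firstInclusion n)) =
      (∫ z, ‖fderiv ℝ ψ z (Pi.single 0 (EuclideanSpace.single 0 1))‖ ^ 2) +
        ε ^ 2 * ∫ z, (‖fderiv ℝ ψ z (Pi.single 0 (EuclideanSpace.single 1 1))‖ ^ 2 +
          ‖fderiv ℝ ψ z (Pi.single 0 (EuclideanSpace.single 2 1))‖ ^ 2) := by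
    rw [← integral_const_mul]
    exact integral_add (hint _) (((hint _).add (hint _)).const_mul _)
  rw [hE] at h
  change Real.sqrt (∫ z in {z | ∃ k, k ≠ 0 ∧ ‖z 0 - z k‖ < (ε ^ 2 / (n + 1 : ℕ)) ^ d}, ‖ψ z‖ ^ 2) ≤
    (Real.sqrt interactionSqConst + 1) * (ε ^ 2 / (n + 1 : ℕ)) ^ (d - 1 / 3) *
      (Real.sqrt (∫ z, ‖fderiv ℝ ψ z (Pi.single 0 (EuclideanSpace.single 0 1))‖ ^ 2) +
        ε * Real.sqrt (∫ z, (‖fderiv ℝ ψ z (Pi.single 0 (EuclideanSpace.single 1 1))‖ ^ 2 +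
          ‖fderiv ℝ ψ z (Pi.single 0 (EuclideanSpace.single 2 1))‖ ^ 2)))
  have hD1 : 0 ≤ ∫ z, ‖fderiv ℝ ψ z (Pi.single 0 (EuclideanSpace.single 0 1))‖ ^ 2 :=
    integral_nonneg fun z => by positivity
  have hD2 : 0 ≤ ∫ z, (‖fderiv ℝ ψ z (Pi.single 0 (EuclideanSpace.single 1 1))‖ ^ 2 +
      ‖fderiv ℝ ψ z (Pi.single 0 (EuclideanSpace.single 2 1))‖ ^ 2) :=
    integral_nonneg fun z => by positivity
  generalize (∫ z, ‖fderiv ℝ ψ z (Pi.single 0 (EuclideanSpace.single 0 1))‖ ^ 2) = D₁ at *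
  generalize (∫ z, (‖fderiv ℝ ψ z (Pi.single 0 (EuclideanSpace.single 1 1))‖ ^ 2 +
      ‖fderiv ℝ ψ z (Pi.single 0 (EuclideanSpace.single 2 1))‖ ^ 2)) = D₂ at *
  have hm0 : 0 ≤ (ε ^ 2 / (n + 1 : ℕ)) ^ (d - 1 / 3) := by positivity
  generalize (ε ^ 2 / (n + 1 : ℕ)) ^ (d - 1 / 3) = m at *
  refine Real.sqrt_le_iff.2 ⟨by positivity, h.trans ?_⟩
  rw [mul_pow, mul_pow]
  gcongr
  · nlinarith [Real.sq_sqrt hK0, Real.sqrt_nonneg interactionSqConst]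
  · have : 0 ≤ Real.sqrt D₁ * (ε * Real.sqrt D₂) := by positivity
    nlinarith [Real.sq_sqrt hD1, Real.sq_sqrt hD2]
end

section
/- Let N ≥ 2 be an integer, ε ∈ (0,1], μ := ε²/N, d > 1/3, and define B̄₁ := {(z₁,…,z_N) ∈ (ℝ³)^N : |z_k − z_l| < μ^d for some k, l ∈ {2,…,N} with k ≠ l}. There is a universal constant C such that for every ψ ∈ C_c^∞((ℝ³)^N; ℂ): ‖1_{B̄₁} ψ‖ ≤ C μ^{d − 1/3} ( Σ_{k=2}^N ( ‖∂_{x_k} ψ‖² + ε² ‖∇_{y_k} ψ‖² ) )^{1/2}. -/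
open MeasureTheory
open scoped ENNReal NNReal

/-- The three-dimensional Euclidean space. -/
local notation "ℝ³" => EuclideanSpace ℝ (Fin 3)

/-- `|A e₀|² + ε² (|A e₁|² + |A e₂|²)`, the squared length of a covector `A` on `ℝ³` for the metric
that weights the last two directions by `ε`. -/
noncomputable def anisotropicNormSq (ε : ℝ) (A : ℝ³ →L[ℝ] ℂ) : ℝ :=
  ‖A (EuclideanSpace.single 0 1)‖ ^ 2 +
    ε ^ 2 * (‖A (EuclideanSpace.single 1 1)‖ ^ 2 + ‖A (EuclideanSpace.single 2 1)‖ ^ 2)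

lemma anisotropicNormSq_nonneg (ε : ℝ) (A : ℝ³ →L[ℝ] ℂ) : 0 ≤ anisotropicNormSq ε A := by
  unfold anisotropicNormSq; positivity

@[fun_prop]
lemma continuous_anisotropicNormSq (ε : ℝ) : Continuous (anisotropicNormSq ε) := by
  unfold anisotropicNormSq; fun_prop

/-- The dilation of `ℝ³` by `ε` in the last two directions. -/
noncomputable def anisotropicDilation (ε : ℝ) : ℝ³ →L[ℝ] ℝ³ :=
  LinearMap.toContinuousLinearMap (Matrix.toEuclideanLin (Matrix.diagonal ![1, ε, ε]))

lemma anisotropicDilation_apply (ε : ℝ) (w : ℝ³) :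
    anisotropicDilation ε w = w 0 • EuclideanSpace.single 0 1 +
      ((w 1 * ε) • EuclideanSpace.single 1 1 + (w 2 * ε) • EuclideanSpace.single 2 1) := by
  ext i
  fin_cases i <;>
    simp [anisotropicDilation, Matrix.toLpLin_apply, Matrix.mulVec_diagonal, mul_comm]

lemma det_anisotropicDilation (ε : ℝ) :
    LinearMap.det (anisotropicDilation ε : ℝ³ →ₗ[ℝ] ℝ³) = ε ^ 2 := by
  simp [anisotropicDilation, Matrix.toEuclideanLin_eq_toLin_orthonormal, LinearMap.det_toLin,
    Fin.prod_univ_three, sq]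

lemma map_anisotropicDilation {ε : ℝ} (hε : 0 < ε) :
    Measure.map (anisotropicDilation ε) (volume : Measure ℝ³) =
      ENNReal.ofReal (ε ^ 2)⁻¹ • volume := by
  have h : LinearMap.det (anisotropicDilation ε : ℝ³ →ₗ[ℝ] ℝ³) ≠ 0 := by
    rw [det_anisotropicDilation]; positivity
  have := Measure.map_linearMap_addHaar_eq_smul_addHaar (volume : Measure ℝ³) h
  rwa [det_anisotropicDilation, abs_of_pos (by positivity)] at this

lemma eLpNorm_comp_anisotropicDilation {F : Type*} [NormedAddCommGroup F] {ε : ℝ} (hε : 0 < ε)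
    {u : ℝ³ → F} (hu : Continuous u) (p : ℝ≥0∞) :
    eLpNorm (u ∘ anisotropicDilation ε) p volume =
      ENNReal.ofReal (ε ^ 2)⁻¹ ^ (1 / p).toReal * eLpNorm u p volume := by
  rw [← eLpNorm_map_measure hu.aestronglyMeasurable (by fun_prop),
    map_anisotropicDilation hε, eLpNorm_smul_measure_of_ne_zero (by simp; positivity), smul_eq_mul]

lemma norm_comp_anisotropicDilation_le (ε : ℝ) (A : ℝ³ →L[ℝ] ℂ) :
    ‖A ∘L anisotropicDilation ε‖ ≤ √(anisotropicNormSq ε A) := by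
  refine ContinuousLinearMap.opNorm_le_bound _ (Real.sqrt_nonneg _) fun w ↦ ?_
  rw [ContinuousLinearMap.comp_apply, anisotropicDilation_apply, EuclideanSpace.norm_eq,
    ← Real.sqrt_mul (anisotropicNormSq_nonneg ε A)]
  refine Real.le_sqrt_of_sq_le ?_
  simp only [map_add, map_smul, Fin.sum_univ_three, anisotropicNormSq, Real.norm_eq_abs, sq_abs]
  set a := A (EuclideanSpace.single 0 1)
  set b := A (EuclideanSpace.single 1 1)
  set c := A (EuclideanSpace.single 2 1)
  have h : ‖w 0 • a + ((w 1 * ε) • b + (w 2 * ε) • c)‖ ≤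
      |w 0| * ‖a‖ + (|w 1| * (|ε| * ‖b‖) + |w 2| * (|ε| * ‖c‖)) := by
    refine (norm_add_le _ _).trans (add_le_add ?_ ((norm_add_le _ _).trans (add_le_add ?_ ?_))) <;>
      simp [mul_assoc]
  refine (pow_le_pow_left₀ (norm_nonneg _) h 2).trans ?_
  rw [← sq_abs (w 0), ← sq_abs (w 1), ← sq_abs (w 2), ← sq_abs ε]
  nlinarith [sq_nonneg (|w 0| * (|ε| * ‖b‖) - |w 1| * ‖a‖),
    sq_nonneg (|w 0| * (|ε| * ‖c‖) - |w 2| * ‖a‖),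
    sq_nonneg (|w 1| * (|ε| * ‖c‖) - |w 2| * (|ε| * ‖b‖))]

/-- The anisotropic Sobolev inequality on `ℝ³`. -/
lemma exists_eLpNorm_six_le_anisotropic :
    ∃ C : ℝ≥0, ∀ ε : ℝ, 0 < ε → ∀ u : ℝ³ → ℂ, ContDiff ℝ 1 u → HasCompactSupport u →
      eLpNorm u 6 volume ≤ C * ENNReal.ofReal (ε ^ 2)⁻¹ ^ (1 / 3 : ℝ) *
        eLpNorm (fun w ↦ √(anisotropicNormSq ε (fderiv ℝ u w))) 2 volume := by
  refine ⟨eLpNormLESNormFDerivOfEqInnerConst (volume : Measure ℝ³) 2, fun ε hε u hu hsupp ↦ ?_⟩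
  set C := eLpNormLESNormFDerivOfEqInnerConst (volume : Measure ℝ³) 2
  set c := ENNReal.ofReal (ε ^ 2)⁻¹ with hc
  have hc0 : c ≠ 0 := by simp [hc]; positivity
  have hctop : c ≠ ∞ := ENNReal.ofReal_ne_top
  set D := anisotropicDilation ε
  set g : ℝ³ → ℝ := fun w ↦ √(anisotropicNormSq ε (fderiv ℝ u w))
  have hg : Continuous g := by
    have := hu.continuous_fderiv one_ne_zero
    fun_prop
  have hdet : LinearMap.det (D : ℝ³ →ₗ[ℝ] ℝ³) ≠ 0 := by
    rw [det_anisotropicDilation]; positivity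
  have hsupp' : HasCompactSupport (u ∘ D) :=
    hsupp.comp_homeomorph
      (LinearMap.equivOfDetNeZero (D : ℝ³ →ₗ[ℝ] ℝ³) hdet).toContinuousLinearEquiv.toHomeomorph
  have hsob := eLpNorm_le_eLpNorm_fderiv_of_eq_inner (volume : Measure ℝ³)
    (hu.comp D.contDiff) hsupp' (p := 2) (p' := 6) (by norm_num) (by simp) (by norm_num)
  have hfderiv : eLpNorm (fderiv ℝ (u ∘ D)) 2 volume ≤ eLpNorm (g ∘ D) 2 volume := by
    refine eLpNorm_mono fun w ↦ ?_
    rw [fderiv_comp w (hu.differentiable one_ne_zero _) D.differentiableAt, D.fderiv,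
      Function.comp_apply, Real.norm_of_nonneg (Real.sqrt_nonneg _)]
    exact norm_comp_anisotropicDilation_le ε _
  rw [eLpNorm_comp_anisotropicDilation hε hg] at hfderiv
  simp only [ENNReal.coe_ofNat, NNReal.coe_ofNat] at hsob
  rw [eLpNorm_comp_anisotropicDilation hε hu.continuous] at hsob
  have key := hsob.trans (mul_le_mul_right hfderiv _)
  have h6 : c ^ (1 / 6 : ℝ) ≠ 0 := by simp [hc0, hctop]
  have h6' : c ^ (1 / 6 : ℝ) ≠ ∞ := ENNReal.rpow_ne_top_of_nonneg (by norm_num) hctop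
  refine (ENNReal.mul_le_mul_iff_right h6 h6').1 ?_
  calc c ^ (1 / 6 : ℝ) * eLpNorm u 6 volume ≤ C * (c ^ (1 / 2 : ℝ) * eLpNorm g 2 volume) := by
        simpa [← hc] using key
    _ = c ^ (1 / 6 : ℝ) * (C * c ^ (1 / 3 : ℝ) * eLpNorm g 2 volume) := by
        rw [show (1 / 2 : ℝ) = 1 / 6 + 1 / 3 by norm_num, ENNReal.rpow_add _ _ hc0 hctop]
        ring

/-- A set of finite volume carries little `L²` mass of a function with finite anisotropic
Dirichlet energy. -/
lemma exists_setLIntegral_sq_le_anisotropic :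
    ∃ C : ℝ≥0, ∀ ε : ℝ, 0 < ε → ∀ u : ℝ³ → ℂ, ContDiff ℝ 1 u → HasCompactSupport u →
      ∀ S : Set ℝ³, ∫⁻ w in S, ‖u w‖ₑ ^ 2 ≤
        (C * (ENNReal.ofReal (ε ^ 2)⁻¹ * volume S) ^ (1 / 3 : ℝ)) ^ 2 *
          ∫⁻ w, ENNReal.ofReal (anisotropicNormSq ε (fderiv ℝ u w)) := by
  obtain ⟨C, hC⟩ := exists_eLpNorm_six_le_anisotropic
  refine ⟨C, fun ε hε u hu hsupp S ↦ ?_⟩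
  have hsq {F : Type} [NormedAddCommGroup F] (f : ℝ³ → F) (ν : Measure ℝ³) :
      eLpNorm f 2 ν ^ 2 = ∫⁻ w, ‖f w‖ₑ ^ 2 ∂ν := by
    simpa using eLpNorm_nnreal_pow_eq_lintegral (f := f) (μ := ν) (p := 2) two_ne_zero
  have henergy : ∫⁻ w, ENNReal.ofReal (anisotropicNormSq ε (fderiv ℝ u w)) =
      eLpNorm (fun w ↦ √(anisotropicNormSq ε (fderiv ℝ u w))) 2 volume ^ 2 := by
    rw [hsq]
    refine lintegral_congr fun w ↦ ?_
    rw [Real.enorm_of_nonneg (Real.sqrt_nonneg _), ← ENNReal.ofReal_pow (Real.sqrt_nonneg _),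
      Real.sq_sqrt (anisotropicNormSq_nonneg _ _)]
  rw [← hsq, henergy, ← mul_pow]
  refine pow_le_pow_left₀ zero_le ?_ 2
  have hhol := eLpNorm_le_eLpNorm_mul_rpow_measure_univ (μ := volume.restrict S) (p := 2) (q := 6)
    (by norm_num) hu.continuous.aestronglyMeasurable
  rw [Measure.restrict_apply_univ] at hhol
  refine hhol.trans ?_
  have hexp : 1 / (2 : ℝ≥0∞).toReal - 1 / (6 : ℝ≥0∞).toReal = 1 / 3 := by norm_num
  rw [hexp, ENNReal.mul_rpow_of_nonneg _ _ (by norm_num)]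
  refine (mul_le_mul_left ((eLpNorm_mono_measure u Measure.restrict_le_self).trans
    (hC ε hε u hu hsupp)) _).trans_eq ?_
  ring

lemma HasCompactSupport.comp_update {ι : Type*} [DecidableEq ι] {Y : ι → Type*}
    [∀ i, TopologicalSpace (Y i)] [∀ i, R1Space (Y i)] {ψ : (∀ i, Y i) → ℂ}
    (hψ : HasCompactSupport ψ) (x : ∀ i, Y i) (k : ι) :
    HasCompactSupport fun w ↦ ψ (Function.update x k w) := by
  refine HasCompactSupport.intro (hψ.isCompact.image (continuous_apply k)) fun w hw ↦ ?_
  refine image_eq_zero_of_notMem_tsupport fun h ↦ hw ⟨_, h, by simp⟩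

lemma isOpen_setOf_exists_norm_sub_lt {ι X : Type*} [TopologicalSpace X] {f : X → ℝ³}
    {g : ι → X → ℝ³} (hf : Continuous f) (hg : ∀ l, Continuous (g l)) (k : ι) (r : ℝ) :
    IsOpen {z | ∃ l, l ≠ k ∧ ‖f z - g l z‖ < r} := by
  have : {z | ∃ l, l ≠ k ∧ ‖f z - g l z‖ < r} = ⋃ l, ⋃ _ : l ≠ k, {z | ‖f z - g l z‖ < r} := by
    ext; simp
  rw [this]
  exact isOpen_iUnion fun l ↦ isOpen_iUnion fun _ ↦ isOpen_lt (by fun_prop) continuous_const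

lemma volume_setOf_exists_norm_sub_lt_le {ι : Type*} [Fintype ι] (x : ι → ℝ³) (k : ι) {r : ℝ}
    (hr : 0 < r) :
    volume {w : ℝ³ | ∃ l, l ≠ k ∧ ‖w - x l‖ < r} ≤
      ENNReal.ofReal (Fintype.card ι * r ^ 3) * volume (Metric.ball (0 : ℝ³) 1) := by
  have hsub : {w : ℝ³ | ∃ l, l ≠ k ∧ ‖w - x l‖ < r} ⊆ ⋃ l, Metric.ball (x l) r := by
    rintro w ⟨l, -, hl⟩
    exact Set.mem_iUnion.2 ⟨l, by simpa [dist_eq_norm] using hl⟩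
  refine (measure_mono hsub).trans ((measure_iUnion_fintype_le _ _).trans_eq ?_)
  simp_rw [Measure.addHaar_ball_of_pos volume _ hr]
  rw [ENNReal.ofReal_mul (by positivity)]
  simp [mul_assoc]

/-- In an `ι`-particle system, the `L²` mass of the configurations in which the `k`-th particle is
`r`-close to another one is controlled by the anisotropic Dirichlet energy of the `k`-th particle.
-/
lemma exists_setLIntegral_near_others_le :
    ∃ C : ℝ≥0, ∀ (ι : Type) [Fintype ι] [DecidableEq ι] (ε : ℝ), 0 < ε → ∀ r : ℝ, 0 < r →
      ∀ ψ : (ι → ℝ³) → ℂ, ContDiff ℝ 1 ψ → HasCompactSupport ψ → ∀ k : ι,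
        ∫⁻ z in {z | ∃ l, l ≠ k ∧ ‖z k - z l‖ < r}, ‖ψ z‖ₑ ^ 2 ≤
          (C * ENNReal.ofReal ((ε ^ 2)⁻¹ * (Fintype.card ι * r ^ 3)) ^ (1 / 3 : ℝ)) ^ 2 *
            ∫⁻ z, ENNReal.ofReal (anisotropicNormSq ε
              (fderiv ℝ ψ z ∘L ContinuousLinearMap.single ℝ (fun _ : ι ↦ ℝ³) k)) := by
  obtain ⟨C, hC⟩ := exists_setLIntegral_sq_le_anisotropic
  set V := volume (Metric.ball (0 : ℝ³) 1)
  have hVtop : V ^ (1 / 3 : ℝ) ≠ ∞ :=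
    ENNReal.rpow_ne_top_of_nonneg (by norm_num) measure_ball_lt_top.ne
  refine ⟨C * (V ^ (1 / 3 : ℝ)).toNNReal, fun ι _ _ ε hε r hr ψ hψ hsupp k ↦ ?_⟩
  set B : Set (ι → ℝ³) := {z | ∃ l, l ≠ k ∧ ‖z k - z l‖ < r}
  have hB : MeasurableSet B :=
    (isOpen_setOf_exists_norm_sub_lt (continuous_apply k) continuous_apply k r).measurableSet
  have hψm : Measurable fun z ↦ ‖ψ z‖ₑ ^ 2 := by
    have := hψ.continuous.measurable
    fun_prop
  have hGc : Continuous fun z ↦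
      anisotropicNormSq ε (fderiv ℝ ψ z ∘L ContinuousLinearMap.single ℝ (fun _ : ι ↦ ℝ³) k) := by
    have := hψ.continuous_fderiv one_ne_zero
    fun_prop
  have hG : Measurable fun z ↦ ENNReal.ofReal
      (anisotropicNormSq ε (fderiv ℝ ψ z ∘L ContinuousLinearMap.single ℝ (fun _ : ι ↦ ℝ³) k)) :=
    hGc.measurable.ennreal_ofReal
  rw [← lintegral_indicator hB, ← lintegral_const_mul _ hG]
  refine lintegral_le_of_lmarginal_le (μ := fun _ ↦ volume) {k} (hψm.indicator hB)
    (hG.const_mul _) fun x ↦ ?_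
  rw [lmarginal_singleton, lmarginal_singleton]
  have hupd : ContDiff ℝ 1 (Function.update x k) := contDiff_update 1 x k
  have hslice := hC ε hε (fun w ↦ ψ (Function.update x k w)) (hψ.comp hupd)
    (hsupp.comp_update x k) {w | ∃ l, l ≠ k ∧ ‖w - x l‖ < r}
  have hS : MeasurableSet {w : ℝ³ | ∃ l, l ≠ k ∧ ‖w - x l‖ < r} :=
    (isOpen_setOf_exists_norm_sub_lt continuous_id (fun _ ↦ continuous_const) k r).measurableSet
  have hfd (w : ℝ³) : fderiv ℝ (fun w ↦ ψ (Function.update x k w)) w =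
      fderiv ℝ ψ (Function.update x k w) ∘L ContinuousLinearMap.single ℝ (fun _ : ι ↦ ℝ³) k := by
    have := ((hψ.differentiable one_ne_zero _).hasFDerivAt.comp w
      (hasFDerivAt_update (𝕜 := ℝ) x (i := k) w)).fderiv
    refine this.trans ?_
    congr 1
    ext v i : 2
    by_cases h : i = k
    · subst h; simp
    · simp [h]
  have hmem (w : ℝ³) : Function.update x k w ∈ B ↔ ∃ l, l ≠ k ∧ ‖w - x l‖ < r := by
    refine exists_congr fun l ↦ and_congr_right fun h ↦ ?_
    simp [h]
  simp only [hfd] at hslice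
  rw [← lintegral_indicator hS] at hslice
  have hconst : C * (ENNReal.ofReal (ε ^ 2)⁻¹ *
      volume {w : ℝ³ | ∃ l, l ≠ k ∧ ‖w - x l‖ < r}) ^ (1 / 3 : ℝ) ≤
      (C * (V ^ (1 / 3 : ℝ)).toNNReal : ℝ≥0) *
        ENNReal.ofReal ((ε ^ 2)⁻¹ * (Fintype.card ι * r ^ 3)) ^ (1 / 3 : ℝ) := by
    rw [ENNReal.coe_mul, ENNReal.coe_toNNReal hVtop, mul_assoc,
      ← ENNReal.mul_rpow_of_nonneg _ _ (by norm_num), ENNReal.ofReal_mul (by positivity)]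
    refine mul_le_mul_right (ENNReal.rpow_le_rpow ?_ (by norm_num)) _
    refine (mul_le_mul_right (volume_setOf_exists_norm_sub_lt_le x k hr) _).trans_eq ?_
    ring
  calc _ = _ := ?_
    _ ≤ _ := hslice
    _ ≤ _ := mul_le_mul_left (pow_le_pow_left₀ zero_le hconst 2) _
    _ = _ := ?_
  · refine lintegral_congr fun w ↦ ?_
    simp only [Set.indicator, hmem, Set.mem_ofPred_eq]
  · exact (lintegral_const_mul _ (hG.comp (measurable_update x))).symm

lemma lintegral_biUnion_finset_le {α β : Type*} [MeasurableSpace α] {ν : Measure α} (T : Finset β)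
    (s : β → Set α) (f : α → ℝ≥0∞) :
    ∫⁻ a in ⋃ k ∈ T, s k, f a ∂ν ≤ ∑ k ∈ T, ∫⁻ a in s k, f a ∂ν := by
  have h := lintegral_iUnion_le (μ := ν) (fun k : T ↦ s k) f
  rw [tsum_fintype, Finset.sum_coe_sort T fun k ↦ ∫⁻ a in s k, f a ∂ν] at h
  rwa [← Finset.set_biUnion_coe, Set.biUnion_eq_iUnion]

lemma anisotropicNormSq_comp_single {ι : Type*} [DecidableEq ι] (ε : ℝ) (A : (ι → ℝ³) →L[ℝ] ℂ)
    (k : ι) :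
    anisotropicNormSq ε (A ∘L ContinuousLinearMap.single ℝ (fun _ : ι ↦ ℝ³) k) =
      ‖A (Pi.single k (EuclideanSpace.single 0 1))‖ ^ 2 +
        ε ^ 2 * (‖A (Pi.single k (EuclideanSpace.single 1 1))‖ ^ 2 +
          ‖A (Pi.single k (EuclideanSpace.single 2 1))‖ ^ 2) := by
  simp [anisotropicNormSq]

lemma integrable_norm_fderiv_apply_sq {E : Type*} [NormedAddCommGroup E] [NormedSpace ℝ E]
    [MeasurableSpace E] [OpensMeasurableSpace E] {ν : Measure E} [IsFiniteMeasureOnCompacts ν]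
    {ψ : E → ℂ} (hψ : ContDiff ℝ 1 ψ) (hsupp : HasCompactSupport ψ) (v : E) :
    Integrable (fun z ↦ ‖fderiv ℝ ψ z v‖ ^ 2) ν := by
  have hc : Continuous (fderiv ℝ ψ) := hψ.continuous_fderiv one_ne_zero
  refine Continuous.integrable_of_hasCompactSupport (by fun_prop) ?_
  refine HasCompactSupport.intro (hsupp.fderiv ℝ).isCompact fun z hz ↦ ?_
  simp [image_eq_zero_of_notMem_tsupport hz]

/-- There is a universal constant `C` such that for every `N ≥ 2`, `ε ∈ (0,1]`, `μ := ε²/N`,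
`d > 1/3`, and every smooth compactly supported `ψ` on `(ℝ³)^N`, with
`B̄₁ := {z : |z_k - z_l| < μ^d for some k ≠ l, both ≠ 1}`:
`‖1_{B̄₁} ψ‖ ≤ C μ^(d - 1/3) (∑_{k=2}^N (‖∂_{x_k}ψ‖² + ε² ‖∇_{y_k}ψ‖²))^(1/2)`. -/
theorem other_particles_neighbourhood_bound :
    ∃ C > (0:ℝ), ∀ N : ℕ, ∀ hN : 2 ≤ N, ∀ ε : ℝ, ε ∈ Set.Ioc (0:ℝ) 1 →
      ∀ d : ℝ, 1/3 < d →
      ∀ ψ : (Fin N → EuclideanSpace ℝ (Fin 3)) → ℂ, ContDiff ℝ (⊤ : ℕ∞) ψ → HasCompactSupport ψ →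
        Real.sqrt (∫ z in {z : Fin N → EuclideanSpace ℝ (Fin 3) |
            ∃ k l : Fin N, k ≠ ⟨0, by omega⟩ ∧ l ≠ ⟨0, by omega⟩ ∧ k ≠ l ∧
              ‖z k - z l‖ < (ε ^ 2 / N) ^ d}, ‖ψ z‖ ^ 2) ≤
          C * (ε ^ 2 / N) ^ (d - 1/3) *
            Real.sqrt (∑ k ∈ Finset.univ.filter (fun k : Fin N => k ≠ ⟨0, by omega⟩),
              ((∫ z : Fin N → EuclideanSpace ℝ (Fin 3),
                  ‖fderiv ℝ ψ z (Pi.single k (EuclideanSpace.single (0 : Fin 3) (1:ℝ)))‖ ^ 2) +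
                ε ^ 2 * ∫ z : Fin N → EuclideanSpace ℝ (Fin 3),
                  (‖fderiv ℝ ψ z (Pi.single k (EuclideanSpace.single (1 : Fin 3) (1:ℝ)))‖ ^ 2 +
                    ‖fderiv ℝ ψ z (Pi.single k (EuclideanSpace.single (2 : Fin 3) (1:ℝ)))‖ ^ 2))) := by
  obtain ⟨C, hC⟩ := exists_setLIntegral_near_others_le
  refine ⟨C + 1, by positivity, fun N hN ε ⟨hε, _⟩ d _ ψ hψ hsupp ↦ ?_⟩
  have hN0 : (0 : ℝ) < N := by exact_mod_cast (by omega : 0 < N)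
  set o : Fin N := ⟨0, by omega⟩
  set m : ℝ := ε ^ 2 / N with hm
  have hm0 : 0 < m := by positivity
  set B : Set (Fin N → ℝ³) := {z | ∃ k l : Fin N, k ≠ o ∧ l ≠ o ∧ k ≠ l ∧ ‖z k - z l‖ < m ^ d}
  have hψ1 : ContDiff ℝ 1 ψ := hψ.of_le (by exact_mod_cast le_top)
  have hint (k : Fin N) (i : Fin 3) : Integrable fun z ↦
      ‖fderiv ℝ ψ z (Pi.single k (EuclideanSpace.single i (1 : ℝ)))‖ ^ 2 :=
    integrable_norm_fderiv_apply_sq hψ1 hsupp _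
  have hintε (k : Fin N) : Integrable fun z ↦ ε ^ 2 *
      (‖fderiv ℝ ψ z (Pi.single k (EuclideanSpace.single (1 : Fin 3) (1 : ℝ)))‖ ^ 2 +
        ‖fderiv ℝ ψ z (Pi.single k (EuclideanSpace.single (2 : Fin 3) (1 : ℝ)))‖ ^ 2) :=
    ((hint k 1).add (hint k 2)).const_mul (ε ^ 2)
  set E : Fin N → (Fin N → ℝ³) → ℝ := fun k z ↦
    anisotropicNormSq ε (fderiv ℝ ψ z ∘L ContinuousLinearMap.single ℝ (fun _ ↦ ℝ³) k) with hE
  have hEint (k : Fin N) : Integrable (E k) := by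
    simp only [hE, anisotropicNormSq_comp_single]
    exact (hint k 0).add (hintε k)
  have hE0 (k : Fin N) : 0 ≤ ∫ z, E k z := integral_nonneg fun _ ↦ anisotropicNormSq_nonneg _ _
  have henergy (k : Fin N) :
      (∫ z, ‖fderiv ℝ ψ z (Pi.single k (EuclideanSpace.single (0 : Fin 3) (1:ℝ)))‖ ^ 2) +
        ε ^ 2 * ∫ z, (‖fderiv ℝ ψ z (Pi.single k (EuclideanSpace.single (1 : Fin 3) (1:ℝ)))‖ ^ 2 +
          ‖fderiv ℝ ψ z (Pi.single k (EuclideanSpace.single (2 : Fin 3) (1:ℝ)))‖ ^ 2) =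
      ∫ z, E k z := by
    simp only [hE, anisotropicNormSq_comp_single]
    rw [integral_add (hint k 0) (hintε k), integral_const_mul]
  simp only [henergy]
  set T := Finset.univ.filter fun k : Fin N ↦ k ≠ o
  set K : ℝ := C * m ^ (d - 1 / 3) with hK
  have hK0 : 0 ≤ K := by positivity
  have hconst : (C : ℝ≥0∞) * ENNReal.ofReal ((ε ^ 2)⁻¹ * (Fintype.card (Fin N) * (m ^ d) ^ 3)) ^
      (1 / 3 : ℝ) = ENNReal.ofReal K := by
    have hbase : (ε ^ 2)⁻¹ * (Fintype.card (Fin N) * (m ^ d) ^ 3) = (m ^ (d - 1 / 3)) ^ 3 := by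
      rw [← Real.rpow_mul_natCast hm0.le (d - 1 / 3), ← Real.rpow_mul_natCast hm0.le,
        show (d - 1 / 3) * (3 : ℕ) = d * (3 : ℕ) - 1 by push_cast; ring,
        Real.rpow_sub_one hm0.ne', Fintype.card_fin, hm]
      field_simp
    rw [hbase, ENNReal.ofReal_rpow_of_nonneg (by positivity) (by norm_num),
      ← Real.rpow_natCast_mul (by positivity), hK, ENNReal.ofReal_mul C.coe_nonneg,
      ENNReal.ofReal_coe_nnreal]
    norm_num
  have hcover : B ⊆ ⋃ k ∈ T, {z | ∃ l, l ≠ k ∧ ‖z k - z l‖ < m ^ d} := by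
    rintro z ⟨k, l, hk, -, hkl, h⟩
    exact Set.mem_biUnion (by simpa [T] using hk) ⟨l, hkl.symm, h⟩
  have hlint : ∫⁻ z in B, ‖ψ z‖ₑ ^ 2 ≤ ENNReal.ofReal (K ^ 2 * ∑ k ∈ T, ∫ z, E k z) := by
    calc ∫⁻ z in B, ‖ψ z‖ₑ ^ 2
        ≤ ∑ k ∈ T, ∫⁻ z in {z | ∃ l, l ≠ k ∧ ‖z k - z l‖ < m ^ d}, ‖ψ z‖ₑ ^ 2 :=
          (lintegral_mono_set hcover).trans (lintegral_biUnion_finset_le _ _ _)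
      _ ≤ ∑ k ∈ T, ENNReal.ofReal (K ^ 2 * ∫ z, E k z) := by
          refine Finset.sum_le_sum fun k _ ↦ ?_
          refine (hC (Fin N) ε hε (m ^ d) (by positivity) ψ hψ1 hsupp k).trans_eq ?_
          rw [hconst, ENNReal.ofReal_mul (sq_nonneg K), ENNReal.ofReal_pow hK0,
            ofReal_integral_eq_lintegral_ofReal (hEint k)
              (.of_forall fun _ ↦ anisotropicNormSq_nonneg _ _)]
      _ = ENNReal.ofReal (K ^ 2 * ∑ k ∈ T, ∫ z, E k z) := by
          rw [Finset.mul_sum, ENNReal.ofReal_sum_of_nonneg fun k _ ↦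
            mul_nonneg (sq_nonneg K) (hE0 k)]
  have hsum0 : 0 ≤ ∑ k ∈ T, ∫ z, E k z := Finset.sum_nonneg fun k _ ↦ hE0 k
  have hreal : ∫ z in B, ‖ψ z‖ ^ 2 ≤ K ^ 2 * ∑ k ∈ T, ∫ z, E k z := by
    have hc : Continuous fun z ↦ ‖ψ z‖ ^ 2 := hψ.continuous.norm.pow 2
    rw [integral_eq_lintegral_of_nonneg_ae (.of_forall fun _ ↦ sq_nonneg _)
      hc.aestronglyMeasurable]
    refine ENNReal.toReal_le_of_le_ofReal (by positivity) ?_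
    simpa [ENNReal.ofReal_pow] using hlint
  calc √(∫ z in B, ‖ψ z‖ ^ 2) ≤ √(K ^ 2 * ∑ k ∈ T, ∫ z, E k z) := Real.sqrt_le_sqrt hreal
    _ = K * √(∑ k ∈ T, ∫ z, E k z) := by rw [Real.sqrt_mul (sq_nonneg K), Real.sqrt_sq hK0]
    _ ≤ (C + 1) * m ^ (d - 1 / 3) * √(∑ k ∈ T, ∫ z, E k z) := by
        rw [hK]; gcongr; linarith
end

section
/- There is a constant C depending only on a and ‖w‖_{L^∞} such that the radial derivative of g_β, namely g_β'(r) := d/dr [1 − f̃(r)/r], satisfies |g_β'(r)| ≤ C/r for 0 < r ≤ μ and |g_β'(r)| ≤ C ( μ^{1−β̃}/r + μ/r² ) for μ ≤ r ≤ R_β. -/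
open Set

namespace TangentScattering

variable (S : TangentScattering)

lemma mu_pos : 0 < S.mu := S.hmu.1

lemma rpow_beta_pos : 0 < S.mu ^ S.beta := Real.rpow_pos_of_pos S.mu_pos _

lemma mu_lt_rpow_beta : S.mu < S.mu ^ S.beta := by
  simpa using Real.rpow_lt_rpow_of_exponent_gt S.mu_pos S.hmu.2 S.hbeta.2

lemma rpow_one_sub_three_mul_sq :
    S.mu ^ (1 - 3 * S.beta) * (S.mu ^ S.beta) ^ 2 = S.mu ^ (1 - S.beta) := by
  rw [← Real.rpow_natCast (S.mu ^ S.beta), ← Real.rpow_mul S.mu_pos.le,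
    ← Real.rpow_add S.mu_pos]
  congr 1
  push_cast
  ring

lemma a_mul_rpow_lt_one : S.a * S.mu ^ (1 - S.beta) < 1 := by
  have h := S.hsmall
  rw [Real.rpow_sub S.mu_pos, Real.rpow_one, ← mul_div_assoc, div_lt_one S.rpow_beta_pos]
  linarith

lemma ft'_eq_kappa_mul {r : ℝ} (h0 : 0 ≤ r) (hr : r ≤ S.mu ^ S.beta) :
    S.ft' S.kappa r = S.kappa * S.jt' r := by
  have hmem : r ∈ Icc (0 : ℝ) (S.mu ^ S.beta) := ⟨h0, hr⟩
  have h1 := (S.hft_deriv S.kappa r).hasDerivWithinAt (s := Icc (0 : ℝ) (S.mu ^ S.beta))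
  have h2 := ((S.hjt_deriv r).const_mul S.kappa).hasDerivWithinAt
    (s := Icc (0 : ℝ) (S.mu ^ S.beta))
  have h3 := h2.congr (fun x hx => S.hft_eq S.kappa x hx) (S.hft_eq S.kappa r hmem)
  exact (uniqueDiffOn_Icc S.rpow_beta_pos r hmem).eq_deriv _ h1 h3

lemma jt'_eq_one {r : ℝ} (hr : S.mu ≤ r) : S.jt' r = 1 := by
  have h1 := (S.hjt_deriv r).hasDerivWithinAt (s := Ici r)
  have h2 := (((hasDerivAt_id r).sub_const (S.mu * S.a))).hasDerivWithinAt (s := Ici r)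
  have h3 := h2.congr (f₁ := S.jt) (fun x hx => S.hjt_lin x (hr.trans hx)) (S.hjt_lin r hr)
  exact (uniqueDiffOn_Ici r r self_mem_Ici).eq_deriv _ h1 h3

lemma convexOn_jt : ConvexOn ℝ (Icc 0 S.mu) S.jt := by
  have hd : deriv S.jt = S.jt' := funext fun r => (S.hjt_deriv r).deriv
  refine MonotoneOn.convexOn_of_deriv (convex_Icc _ _)
    (fun r _ => (S.hjt_deriv r).continuousAt.continuousWithinAt)
    (fun r _ => (S.hjt_deriv r).differentiableAt.differentiableWithinAt) ?_
  rw [hd, interior_Icc]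
  refine monotoneOn_of_deriv_nonneg (convex_Ioo _ _)
    (fun r hr => (S.hjt_ode r hr).continuousAt.continuousWithinAt) ?_ ?_
  · rw [interior_Ioo]
    exact fun r hr => (S.hjt_ode r hr).differentiableAt.differentiableWithinAt
  · rw [interior_Ioo]
    intro r hr
    rw [(S.hjt_ode r hr).deriv]
    have := S.hw_nonneg (r / S.mu)
    have := S.hjt_nonneg r hr.1.le
    positivity

lemma jt'_le_one {r : ℝ} (h0 : 0 ≤ r) : S.jt' r ≤ 1 := by
  rcases lt_or_ge r S.mu with h | h
  · have hl : r ∈ Icc 0 S.mu := ⟨h0, h.le⟩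
    have hm : S.mu ∈ Icc 0 S.mu := ⟨S.mu_pos.le, le_rfl⟩
    have h1 := S.convexOn_jt.le_slope_of_hasDerivAt hl hm h (S.hjt_deriv r)
    have h2 := S.convexOn_jt.slope_le_of_hasDerivAt hl hm h (S.hjt_deriv S.mu)
    rw [S.jt'_eq_one le_rfl] at h2
    exact h1.trans h2
  · exact (S.jt'_eq_one h).le

lemma jt'_nonneg {r : ℝ} (h0 : 0 < r) : 0 ≤ S.jt' r := by
  rw [← (S.hjt_deriv r).hasDerivWithinAt.derivWithin (uniqueDiffOn_Ici (0 : ℝ) r h0.le)]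
  exact S.hjt_mono.derivWithin_nonneg

/-- Conservation of the energy associated with `f̃` beyond `μ^β̃`. -/
lemma energy_eq {r : ℝ} (hr : S.mu ^ S.beta < r) (hR : r ≤ S.Rb) :
    S.ft' S.kappa r ^ 2 + 1 / 2 * S.a * S.mu ^ (1 - 3 * S.beta) * S.ft S.kappa r ^ 2 =
      1 + 1 / 2 * S.a * S.mu ^ (1 - 3 * S.beta) * S.Rb ^ 2 := by
  have hd : ∀ x ∈ Ici r, HasDerivAt (fun s => S.ft' S.kappa s ^ 2 +
      1 / 2 * S.a * S.mu ^ (1 - 3 * S.beta) * S.ft S.kappa s ^ 2) 0 x := by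
    intro x hx
    have h1 := (S.hft_ode S.kappa x (hr.trans_le hx)).pow 2
    have h2 := ((S.hft_deriv S.kappa x).pow 2).const_mul
      (1 / 2 * S.a * S.mu ^ (1 - 3 * S.beta))
    refine (h1.add h2).congr_deriv ?_
    push_cast
    ring
  have h := constant_of_has_deriv_right_zero (a := r) (b := S.Rb)
    (fun x hx => (hd x hx.1).continuousAt.continuousWithinAt)
    (fun x hx => (hd x hx.1).hasDerivWithinAt) S.Rb ⟨hR, le_rfl⟩
  simp only [S.htan_val, S.htan_der] at h
  rw [← h]
  ring

lemma Rb_pos : 0 < S.Rb := S.rpow_beta_pos.trans S.hRb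

lemma kappa_pos : 0 < S.kappa := one_pos.trans S.hkappa.1

variable {S} {C' : ℝ}

lemma abs_ft'_le_of_lt (hC : S.Rb ≤ C' * S.mu ^ S.beta) {r : ℝ} (hr : S.mu ^ S.beta < r)
    (hR : r ≤ S.Rb) : |S.ft' S.kappa r| ≤ 1 + C' ^ 2 := by
  have hE := S.energy_eq hr hR
  have hp := Real.rpow_pos_of_pos S.mu_pos (1 - 3 * S.beta)
  have ha := S.ha
  have hsq : S.Rb ^ 2 ≤ (C' * S.mu ^ S.beta) ^ 2 := pow_le_pow_left₀ S.Rb_pos.le hC 2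
  have h1 : 1 / 2 * S.a * S.mu ^ (1 - 3 * S.beta) * S.Rb ^ 2 ≤ C' ^ 2 :=
    calc _ ≤ 1 / 2 * S.a * S.mu ^ (1 - 3 * S.beta) * (C' * S.mu ^ S.beta) ^ 2 := by gcongr
      _ = 1 / 2 * C' ^ 2 * (S.a * S.mu ^ (1 - S.beta)) := by
        rw [← S.rpow_one_sub_three_mul_sq]; ring
      _ ≤ 1 / 2 * C' ^ 2 * 1 := by
        have := S.a_mul_rpow_lt_one.le
        gcongr
      _ ≤ C' ^ 2 := by nlinarith [sq_nonneg C']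
  have h2 : 0 ≤ 1 / 2 * S.a * S.mu ^ (1 - 3 * S.beta) * S.ft S.kappa r ^ 2 := by positivity
  have h3 := sq_nonneg C'
  have h4 := sq_nonneg (C' ^ 2)
  refine abs_le_of_sq_le_sq ?_ (by positivity)
  nlinarith only [hE, h1, h2, h3, h4]

/-- Since derivatives have the Darboux property, the bound on the slope of `f̃` beyond `μ^β̃` passes
to its slope `κ` at `μ^β̃`. -/
lemma kappa_le (hC : S.Rb ≤ C' * S.mu ^ S.beta) : S.kappa ≤ 1 + C' ^ 2 := by
  by_contra! h
  obtain ⟨m, hm1, hm2⟩ := exists_between h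
  have hk : S.ft' S.kappa (S.mu ^ S.beta) = S.kappa := by
    rw [S.ft'_eq_kappa_mul S.rpow_beta_pos.le le_rfl, S.jt'_eq_one S.mu_lt_rpow_beta.le, mul_one]
  obtain ⟨c, hc, hcm⟩ := exists_hasDerivWithinAt_eq_of_lt_of_gt S.hRb.le
    (fun x _ => (S.hft_deriv S.kappa x).hasDerivWithinAt) (by rwa [hk])
    (show S.ft' S.kappa S.Rb < m by rw [S.htan_der]; nlinarith [sq_nonneg C'])
  have := le_abs_self (S.ft' S.kappa c)
  have := abs_ft'_le_of_lt hC hc.1 hc.2.le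
  linarith

lemma abs_ft'_le (hC : S.Rb ≤ C' * S.mu ^ S.beta) {r : ℝ} (h0 : 0 < r) (hR : r ≤ S.Rb) :
    |S.ft' S.kappa r| ≤ 1 + C' ^ 2 := by
  rcases lt_or_ge (S.mu ^ S.beta) r with h | h
  · exact abs_ft'_le_of_lt hC h hR
  · have h1 := S.jt'_nonneg h0
    have h2 := S.jt'_le_one h0.le
    have h3 := S.kappa_pos
    rw [S.ft'_eq_kappa_mul h0.le h, abs_of_nonneg (by positivity)]
    have := kappa_le hC
    nlinarith

lemma abs_ft_le (hC : S.Rb ≤ C' * S.mu ^ S.beta) {r : ℝ} (h0 : 0 < r) (hR : r ≤ S.Rb) :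
    |S.ft S.kappa r| ≤ (1 + C' ^ 2) * r := by
  have hz : S.ft S.kappa 0 = 0 := by
    rw [S.hft_eq S.kappa 0 ⟨le_rfl, S.rpow_beta_pos.le⟩, S.hjt_zero, mul_zero]
  obtain ⟨c, hc, h⟩ := exists_hasDerivAt_eq_slope (S.ft S.kappa) (S.ft' S.kappa) h0
    (fun x _ => (S.hft_deriv S.kappa x).continuousAt.continuousWithinAt)
    (fun x _ => S.hft_deriv S.kappa x)
  have hb := abs_ft'_le hC hc.1 (hc.2.le.trans hR)
  rwa [h, hz, sub_zero, sub_zero, abs_div, abs_of_pos h0, div_le_iff₀ h0] at hb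

lemma abs_mul_ft'_sub_ft_le (hC : S.Rb ≤ C' * S.mu ^ S.beta) {r : ℝ}
    (hr : S.mu ^ S.beta < r) (hR : r ≤ S.Rb) :
    |r * S.ft' S.kappa r - S.ft S.kappa r| ≤
      S.a * (1 + C' ^ 2) * C' ^ 3 * S.mu ^ (1 - S.beta) * r := by
  have ha := S.ha
  have hb := S.rpow_beta_pos
  have hp := Real.rpow_pos_of_pos S.mu_pos (1 - 3 * S.beta)
  have hq := Real.rpow_pos_of_pos S.mu_pos (1 - S.beta)
  have hC' : 0 < C' := pos_of_mul_pos_left (S.Rb_pos.trans_le hC) hb.le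
  have hd : ∀ x ∈ Icc r S.Rb, HasDerivWithinAt
      (fun s => s * S.ft' S.kappa s - S.ft S.kappa s)
      (-(1 / 2) * S.a * S.mu ^ (1 - 3 * S.beta) * S.ft S.kappa x * x) (Icc r S.Rb) x := by
    intro x hx
    have h1 := (hasDerivAt_id x).mul (S.hft_ode S.kappa x (hr.trans_le hx.1))
    refine ((h1.sub (S.hft_deriv S.kappa x)).congr_deriv ?_).hasDerivWithinAt
    simp only [id]
    ring
  have hbd : ∀ x ∈ Ico r S.Rb,
      ‖-(1 / 2) * S.a * S.mu ^ (1 - 3 * S.beta) * S.ft S.kappa x * x‖ ≤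
        S.a * (1 + C' ^ 2) * C' ^ 2 * S.mu ^ (1 - S.beta) := by
    intro x hx
    have hx0 : 0 < x := hb.trans (hr.trans_le hx.1)
    have hf := abs_ft_le hC hx0 hx.2.le
    have hxC : x ≤ C' * S.mu ^ S.beta := hx.2.le.trans hC
    calc _ = 1 / 2 * S.a * S.mu ^ (1 - 3 * S.beta) * |S.ft S.kappa x| * x := by
          rw [Real.norm_eq_abs, abs_mul, abs_mul, abs_mul, abs_mul, abs_of_pos ha, abs_of_pos hp,
            abs_of_pos hx0, abs_neg, abs_of_pos (by norm_num : (0 : ℝ) < 1 / 2)]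
      _ ≤ 1 * S.a * S.mu ^ (1 - 3 * S.beta) * ((1 + C' ^ 2) * (C' * S.mu ^ S.beta)) *
            (C' * S.mu ^ S.beta) := by
          have : |S.ft S.kappa x| ≤ (1 + C' ^ 2) * (C' * S.mu ^ S.beta) := hf.trans (by gcongr)
          gcongr
          norm_num
      _ = _ := by rw [← S.rpow_one_sub_three_mul_sq]; ring
  have h := norm_image_sub_le_of_norm_deriv_le_segment' hd hbd S.Rb ⟨hR, le_rfl⟩
  rw [S.htan_val, S.htan_der, mul_one, sub_self, zero_sub, norm_neg, Real.norm_eq_abs] at h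
  refine h.trans ?_
  have hlen : S.Rb - r ≤ C' * r := by
    have : C' * S.mu ^ S.beta ≤ C' * r := by gcongr
    have := hb.trans hr
    linarith
  calc _ ≤ S.a * (1 + C' ^ 2) * C' ^ 2 * S.mu ^ (1 - S.beta) * (C' * r) := by gcongr
    _ = _ := by ring

variable (S)

lemma deriv_one_sub_fext_div {r : ℝ} (h0 : 0 < r) (hR : r < S.Rb) :
    deriv (fun s : ℝ => 1 - S.fext s / s) r =
      -((r * S.ft' S.kappa r - S.ft S.kappa r) / r ^ 2) := by
  have heq : (fun s : ℝ => 1 - S.fext s / s) =ᶠ[nhds r] fun s => 1 - S.ft S.kappa s / s := by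
    filter_upwards [Iio_mem_nhds hR] with s hs
    rw [fext, if_pos (mem_Iio.1 hs)]
  rw [heq.deriv_eq]
  refine ((((S.hft_deriv S.kappa r).div (hasDerivAt_id r) h0.ne').const_sub 1).congr_deriv
    ?_).deriv
  simp only [id]
  ring

lemma deriv_one_sub_fext_div_Rb : deriv (fun s : ℝ => 1 - S.fext s / s) S.Rb = 0 := by
  have hz : ∀ s ∈ Ici S.Rb, 1 - S.fext s / s = 0 := fun s hs => by
    rw [fext, if_neg (not_lt.2 hs), div_self (S.Rb_pos.trans_le hs).ne', sub_self]
  by_cases h : DifferentiableAt ℝ (fun s : ℝ => 1 - S.fext s / s) S.Rb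
  · have h1 := h.hasDerivAt.hasDerivWithinAt (s := Ici S.Rb)
    have h2 := (hasDerivWithinAt_const S.Rb (Ici S.Rb) (0 : ℝ)).congr hz (hz _ self_mem_Ici)
    exact (uniqueDiffOn_Ici S.Rb S.Rb self_mem_Ici).eq_deriv _ h1 h2
  · exact deriv_zero_of_not_differentiableAt h

end TangentScattering

/-- Bounds on the radial derivative of `g_β`, i.e. on `d/dr (1 - f̃(r)/r)`: with a constant `C`
depending only on `a` and `‖w‖_∞`, it is bounded by `C/r` for `0 < r ≤ μ` and by
`C (μ^(1-β̃)/r + μ/r²)` for `μ ≤ r ≤ R_β`. -/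
theorem gbeta_radial_derivative_bound (a M C' : ℝ) (ha : 0 < a) (hM : 0 ≤ M) (hC' : 0 < C') :
    ∃ C > (0:ℝ), ∃ μ₀ > (0:ℝ),
      ∀ S : TangentScattering, S.a = a → (∀ r, S.w r ≤ M) →
        S.Rb ≤ C' * S.mu ^ S.beta → S.mu ≤ μ₀ →
        (∀ r : ℝ, 0 < r → r ≤ S.mu →
          |deriv (fun s : ℝ => 1 - S.fext s / s) r| ≤ C / r) ∧
        (∀ r : ℝ, S.mu ≤ r → r ≤ S.Rb →
          |deriv (fun s : ℝ => 1 - S.fext s / s) r| ≤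
            C * (S.mu ^ (1 - S.beta) / r + S.mu / r ^ 2)) := by
  refine ⟨2 * (1 + C' ^ 2) + a * (1 + C' ^ 2) + a * (1 + C' ^ 2) * C' ^ 3, by positivity,
    1, one_pos, ?_⟩
  rintro S rfl - hC -
  have hmu := S.mu_pos
  have hq := Real.rpow_pos_of_pos hmu (1 - S.beta)
  have hmuR : S.mu < S.Rb := S.mu_lt_rpow_beta.trans S.hRb
  refine ⟨fun r h0 hr => ?_, fun r hr hR => ?_⟩
  · have hR := hr.trans_lt hmuR
    rw [S.deriv_one_sub_fext_div h0 hR, abs_neg, abs_div, abs_of_pos (by positivity : 0 < r ^ 2),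
      div_le_div_iff₀ (by positivity) h0]
    have h1 := S.abs_ft'_le hC h0 hR.le
    have h2 := S.abs_ft_le hC h0 hR.le
    have h3 : |r * S.ft' S.kappa r - S.ft S.kappa r| ≤ 2 * (1 + C' ^ 2) * r := by
      refine (abs_sub _ _).trans ?_
      rw [abs_mul, abs_of_pos h0]
      nlinarith
    calc _ ≤ 2 * (1 + C' ^ 2) * r * r := by gcongr
      _ = (2 * (1 + C' ^ 2) + 0 + 0) * r ^ 2 := by ring
      _ ≤ _ := by gcongr <;> positivity
  · have h0 : 0 < r := hmu.trans_le hr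
    rcases hR.eq_or_lt with rfl | hR
    · rw [S.deriv_one_sub_fext_div_Rb, abs_zero]
      positivity
    rw [S.deriv_one_sub_fext_div h0 hR, abs_neg, abs_div, abs_of_pos (by positivity : 0 < r ^ 2)]
    have h3 : |r * S.ft' S.kappa r - S.ft S.kappa r| ≤
        S.a * (1 + C' ^ 2) * C' ^ 3 * (S.mu ^ (1 - S.beta) * r) +
          S.a * (1 + C' ^ 2) * S.mu := by
      rcases lt_or_ge (S.mu ^ S.beta) r with h | h
      · have h4 := S.abs_mul_ft'_sub_ft_le hC h hR.le
        have h5 : 0 ≤ S.a * (1 + C' ^ 2) * S.mu := by positivity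
        linarith
      · have hk := S.kappa_le hC
        have hk0 := S.kappa_pos
        rw [S.ft'_eq_kappa_mul h0.le h, S.jt'_eq_one hr, S.hft_eq _ r ⟨h0.le, h⟩, S.hjt_lin r hr,
          show r * (S.kappa * 1) - S.kappa * (r - S.mu * S.a) = S.a * S.kappa * S.mu by ring,
          abs_of_pos (by positivity)]
        have h5 : 0 ≤ S.a * (1 + C' ^ 2) * C' ^ 3 * (S.mu ^ (1 - S.beta) * r) := by positivity
        have h6 : S.a * S.kappa * S.mu ≤ S.a * (1 + C' ^ 2) * S.mu := by gcongr
        linarith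
    have h7 : 0 ≤ (2 * (1 + C' ^ 2) + S.a * (1 + C' ^ 2)) * (S.mu ^ (1 - S.beta) * r) := by
      positivity
    have h8 : 0 ≤ (2 * (1 + C' ^ 2) + S.a * (1 + C' ^ 2) * C' ^ 3) * S.mu := by positivity
    rw [show S.mu ^ (1 - S.beta) / r + S.mu / r ^ 2 =
      (S.mu ^ (1 - S.beta) * r + S.mu) / r ^ 2 by field_simp, ← mul_div_assoc]
    gcongr
    linarith
end
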